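/- arXiv:1510.07098 — 2 statements merged into one kernel-verified Lean document; each statement's English description precedes it below -/
import Mathlib

section
/- Let R be an associative unital ring and let ℰ be an exact structure on the category Mod R of right R-modules such that Mod R has enough ℰ-projectives and enough ℰ-injectives and ℰ contains all pure exact sequences. Let 𝒴 be a class of pure injective right R-modules that is closed under taking ℰ-cosyzygies, i.e., for every Y ∈ 𝒴 and every conflation 0 → Y → I → C → 0 with I ℰ-injective, C ∈ 𝒴. Then (^⊥𝒴, (^⊥𝒴)^⊥) is a complete hereditary ℰ-cotorsion pair. -/
open CategoryTheory Category Limits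

universe v u

namespace ExactPaper

variable {𝒜 : Type u} [Category.{v} 𝒜] [Abelian 𝒜]

/-- A morphism is an admissible monic w.r.t. a class `c` of short complexes if it occurs
as the first map of a member of `c`. -/
def AdmMono (c : ShortComplex 𝒜 → Prop) {X Y : 𝒜} (f : X ⟶ Y) : Prop :=
  ∃ (Z : 𝒜) (g : Y ⟶ Z) (w : f ≫ g = 0), c (ShortComplex.mk f g w)

/-- A morphism is an admissible epic w.r.t. a class `c` of short complexes if it occurs
as the second map of a member of `c`. -/
def AdmEpi (c : ShortComplex 𝒜 → Prop) {Y Z : 𝒜} (g : Y ⟶ Z) : Prop :=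
  ∃ (X : 𝒜) (f : X ⟶ Y) (w : f ≫ g = 0), c (ShortComplex.mk f g w)

/-- A (Quillen) exact structure on an abelian category `𝒜`: a class of short exact
sequences, called conflations, closed under isomorphisms, containing all split short
exact sequences, such that admissible monics and epics are closed under composition,
pushouts of admissible monics along arbitrary morphisms are admissible monics and
pullbacks of admissible epics along arbitrary morphisms are admissible epics. -/
structure ExactStructure (𝒜 : Type u) [Category.{v} 𝒜] [Abelian 𝒜] where
  conflation : ShortComplex 𝒜 → Prop
  shortExact_of_conflation : ∀ (S : ShortComplex 𝒜), conflation S → S.ShortExact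
  conflation_of_iso : ∀ (S T : ShortComplex 𝒜), (S ≅ T) → conflation S → conflation T
  conflation_of_splitting : ∀ (S : ShortComplex 𝒜), S.Splitting → conflation S
  admMono_comp : ∀ {X Y Z : 𝒜} (f : X ⟶ Y) (g : Y ⟶ Z),
    AdmMono conflation f → AdmMono conflation g → AdmMono conflation (f ≫ g)
  admEpi_comp : ∀ {X Y Z : 𝒜} (f : X ⟶ Y) (g : Y ⟶ Z),
    AdmEpi conflation f → AdmEpi conflation g → AdmEpi conflation (f ≫ g)
  admMono_pushout : ∀ {L M M' : 𝒜} (i : L ⟶ M) (f : L ⟶ M'),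
    AdmMono conflation i → AdmMono conflation (pushout.inr i f)
  admEpi_pullback : ∀ {M N M' : 𝒜} (p : M ⟶ N) (g : M' ⟶ N),
    AdmEpi conflation p → AdmEpi conflation (pullback.snd p g)

namespace ExactStructure

variable (E : ExactStructure 𝒜)

/-- An `ℰ`-projective object. -/
def EProjective (P : 𝒜) : Prop :=
  ∀ (S : ShortComplex 𝒜), E.conflation S → ∀ h : P ⟶ S.X₃, ∃ k : P ⟶ S.X₂, k ≫ S.g = h

/-- An `ℰ`-injective object. -/
def EInjective (I : 𝒜) : Prop :=
  ∀ (S : ShortComplex 𝒜), E.conflation S → ∀ h : S.X₁ ⟶ I, ∃ k : S.X₂ ⟶ I, S.f ≫ k = h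

/-- `𝒜` has enough `ℰ`-projectives. -/
def EnoughProjectives : Prop :=
  ∀ M : 𝒜, ∃ (K P : 𝒜) (i : K ⟶ P) (p : P ⟶ M) (w : i ≫ p = 0),
    E.conflation (ShortComplex.mk i p w) ∧ E.EProjective P

/-- `𝒜` has enough `ℰ`-injectives. -/
def EnoughInjectives : Prop :=
  ∀ M : 𝒜, ∃ (I C : 𝒜) (i : M ⟶ I) (p : I ⟶ C) (w : i ≫ p = 0),
    E.conflation (ShortComplex.mk i p w) ∧ E.EInjective I

/-- `Ext¹_ℰ(M,N) = 0`: every conflation `0 → N → Z → M → 0` splits. -/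
def Ext1Zero (M N : 𝒜) : Prop :=
  ∀ (Z : 𝒜) (i : N ⟶ Z) (p : Z ⟶ M) (w : i ≫ p = 0),
    E.conflation (ShortComplex.mk i p w) → ∃ r : Z ⟶ N, i ≫ r = 𝟙 N

/-- The right `ℰ`-orthogonal class `𝒳^⊥`. -/
def rightPerp (𝒳 : Set 𝒜) : Set 𝒜 := {N | ∀ X ∈ 𝒳, E.Ext1Zero X N}

/-- The left `ℰ`-orthogonal class `^⊥𝒴`. -/
def leftPerp (𝒴 : Set 𝒜) : Set 𝒜 := {M | ∀ Y ∈ 𝒴, E.Ext1Zero M Y}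

/-- A class is closed under `ℰ`-extensions. -/
def ClosedUnderExtensions (𝒯 : Set 𝒜) : Prop :=
  ∀ S : ShortComplex 𝒜, E.conflation S → S.X₁ ∈ 𝒯 → S.X₃ ∈ 𝒯 → S.X₂ ∈ 𝒯

/-- An `ℰ`-resolving class. -/
def Resolving (𝒯 : Set 𝒜) : Prop :=
  (∀ P : 𝒜, E.EProjective P → P ∈ 𝒯) ∧ E.ClosedUnderExtensions 𝒯 ∧
    ∀ S : ShortComplex 𝒜, E.conflation S → S.X₂ ∈ 𝒯 → S.X₃ ∈ 𝒯 → S.X₁ ∈ 𝒯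

/-- An `ℰ`-coresolving class. -/
def Coresolving (𝒯 : Set 𝒜) : Prop :=
  (∀ I : 𝒜, E.EInjective I → I ∈ 𝒯) ∧ E.ClosedUnderExtensions 𝒯 ∧
    ∀ S : ShortComplex 𝒜, E.conflation S → S.X₁ ∈ 𝒯 → S.X₂ ∈ 𝒯 → S.X₃ ∈ 𝒯

/-- `(𝒳,𝒴)` is a complete hereditary `ℰ`-cotorsion pair. -/
def CompleteHereditaryCotorsionPair (𝒳 𝒴 : Set 𝒜) : Prop :=
  𝒳 = E.leftPerp 𝒴 ∧ 𝒴 = E.rightPerp 𝒳 ∧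
  (∀ A : 𝒜, ∃ (Y X : 𝒜) (i : Y ⟶ X) (p : X ⟶ A) (w : i ≫ p = 0),
      E.conflation (ShortComplex.mk i p w) ∧ X ∈ 𝒳 ∧ Y ∈ 𝒴) ∧
  (∀ A : 𝒜, ∃ (Y' X' : 𝒜) (i : A ⟶ Y') (p : Y' ⟶ X') (w : i ≫ p = 0),
      E.conflation (ShortComplex.mk i p w) ∧ X' ∈ 𝒳 ∧ Y' ∈ 𝒴) ∧
  E.Resolving 𝒳

end ExactStructure

/-- `f : X ⟶ A` is an `𝒳`-precover of `A`. -/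
def IsPrecover (𝒳 : Set 𝒜) {X A : 𝒜} (f : X ⟶ A) : Prop :=
  X ∈ 𝒳 ∧ ∀ X' : 𝒜, X' ∈ 𝒳 → ∀ g : X' ⟶ A, ∃ h : X' ⟶ X, h ≫ f = g

/-- `f : X ⟶ A` is an `𝒳`-cover of `A`. -/
def IsCover (𝒳 : Set 𝒜) {X A : 𝒜} (f : X ⟶ A) : Prop :=
  IsPrecover 𝒳 f ∧ ∀ h : X ⟶ X, h ≫ f = f → IsIso h

/-- `f : A ⟶ Y` is a `𝒴`-preenvelope of `A`. -/
def IsPreenvelope (𝒴 : Set 𝒜) {A Y : 𝒜} (f : A ⟶ Y) : Prop :=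
  Y ∈ 𝒴 ∧ ∀ Y' : 𝒜, Y' ∈ 𝒴 → ∀ g : A ⟶ Y', ∃ h : Y ⟶ Y', f ≫ h = g

/-- `f : A ⟶ Y` is a `𝒴`-envelope of `A`. -/
def IsEnvelope (𝒴 : Set 𝒜) {A Y : 𝒜} (f : A ⟶ Y) : Prop :=
  IsPreenvelope 𝒴 f ∧ ∀ h : Y ⟶ Y, f ≫ h = f → IsIso h

/-- A class of objects closed under isomorphisms. -/
def ClosedUnderIsos (𝒳 : Set 𝒜) : Prop := ∀ X Y : 𝒜, (X ≅ Y) → X ∈ 𝒳 → Y ∈ 𝒳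

/-- A class of objects closed under direct summands. -/
def ClosedUnderDirectSummands (𝒳 : Set 𝒜) : Prop :=
  ∀ X Y : 𝒜, (∃ (s : Y ⟶ X) (r : X ⟶ Y), s ≫ r = 𝟙 Y) → X ∈ 𝒳 → Y ∈ 𝒳

end ExactPaper

namespace ExactPaper

open CategoryTheory Limits

variable {R : Type u} [Ring R]

/-- A pure exact sequence of right `R`-modules (i.e. of `Rᵐᵒᵖ`-modules): a short exact
sequence which stays exact after applying `Hom_R(F, −)` for every finitely presented
right `R`-module `F`. -/
def PureSES (S : ShortComplex (ModuleCat.{u} Rᵐᵒᵖ)) : Prop :=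
  S.ShortExact ∧ ∀ F : ModuleCat.{u} Rᵐᵒᵖ, Module.FinitePresentation Rᵐᵒᵖ F →
    ∀ h : F ⟶ S.X₃, ∃ k : F ⟶ S.X₂, k ≫ S.g = h

/-- A pure projective right `R`-module: projective with respect to pure exact sequences. -/
def PureProjective (P : ModuleCat.{u} Rᵐᵒᵖ) : Prop :=
  ∀ S : ShortComplex (ModuleCat.{u} Rᵐᵒᵖ), PureSES S →
    ∀ h : P ⟶ S.X₃, ∃ k : P ⟶ S.X₂, k ≫ S.g = h

/-- A pure injective right `R`-module: injective with respect to pure exact sequences. -/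
def PureInjective (I : ModuleCat.{u} Rᵐᵒᵖ) : Prop :=
  ∀ S : ShortComplex (ModuleCat.{u} Rᵐᵒᵖ), PureSES S →
    ∀ h : S.X₁ ⟶ I, ∃ k : S.X₂ ⟶ I, S.f ≫ k = h

end ExactPaper

namespace ExactPaper

section General

variable {𝒜 : Type u} [Category.{v} 𝒜] [Abelian 𝒜] (E : ExactStructure 𝒜)

attribute [local simp] pullback.lift_fst pullback.lift_snd pushout.inl_desc pushout.inr_desc
  pullback.lift_fst_assoc pullback.lift_snd_assoc pushout.inl_desc_assoc pushout.inr_desc_assoc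

lemma se_desc {A B C T : 𝒜} {a : A ⟶ B} {b : B ⟶ C} {w : a ≫ b = 0}
    (hS : (ShortComplex.mk a b w).ShortExact) (k : B ⟶ T) (hk : a ≫ k = 0) :
    ∃ d : C ⟶ T, b ≫ d = k := by
  have := hS.epi_g
  exact ⟨hS.exact.desc k hk, hS.exact.g_desc k hk⟩

lemma se_lift {A B C T : 𝒜} {a : A ⟶ B} {b : B ⟶ C} {w : a ≫ b = 0}
    (hS : (ShortComplex.mk a b w).ShortExact) (k : T ⟶ B) (hk : k ≫ b = 0) :
    ∃ d : T ⟶ A, d ≫ a = k := by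
  have := hS.mono_f
  exact ⟨hS.exact.lift k hk, hS.exact.lift_f k hk⟩

lemma conflation_of_admEpi (S : ShortComplex 𝒜) (hS : S.ShortExact)
    (h : AdmEpi E.conflation S.g) : E.conflation S := by
  obtain ⟨X, f, w, hc⟩ := h
  have hT := E.shortExact_of_conflation _ hc
  refine E.conflation_of_iso (ShortComplex.mk _ _ w) S (ShortComplex.isoMk
    (IsLimit.conePointUniqueUpToIso hT.fIsKernel hS.fIsKernel) (Iso.refl _) (Iso.refl _)
    ?_ (by simp)) hc
  have := IsLimit.conePointUniqueUpToIso_hom_comp hT.fIsKernel hS.fIsKernel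
    WalkingParallelPair.zero
  simpa using this

lemma conflation_of_admMono (S : ShortComplex 𝒜) (hS : S.ShortExact)
    (h : AdmMono E.conflation S.f) : E.conflation S := by
  obtain ⟨X, f, w, hc⟩ := h
  have hT := E.shortExact_of_conflation _ hc
  refine E.conflation_of_iso (ShortComplex.mk _ _ w) S (ShortComplex.isoMk (Iso.refl _) (Iso.refl _)
    (IsColimit.coconePointUniqueUpToIso hT.gIsCokernel hS.gIsCokernel)
    (by simp) ?_) hc
  have := IsColimit.comp_coconePointUniqueUpToIso_hom hT.gIsCokernel hS.gIsCokernel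
    WalkingParallelPair.one
  simpa using this.symm

lemma pullback_conflation {N J C : 𝒜} (i : N ⟶ J) (p : J ⟶ C) (w : i ≫ p = 0)
    (hc : E.conflation (ShortComplex.mk i p w)) {M : 𝒜} (f : M ⟶ C) :
    E.conflation (ShortComplex.mk (pullback.lift i (0 : N ⟶ M) (by simp [w]))
      (pullback.snd p f) (by simp)) := by
  have hT := E.shortExact_of_conflation _ hc
  have : Mono i := hT.mono_f
  have : Epi p := hT.epi_g
  apply conflation_of_admEpi
  · have hm : Mono (pullback.lift i (0 : N ⟶ M) (by simp [w]) : N ⟶ pullback p f) := by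
      have : Mono ((pullback.lift i (0 : N ⟶ M) (by simp [w]) : N ⟶ pullback p f) ≫
        pullback.fst p f) := by simpa
      exact mono_of_mono _ (pullback.fst p f)
    have he : Epi (pullback.snd p f) := inferInstance
    refine ShortComplex.ShortExact.mk' ?_ hm he
    apply ShortComplex.exact_of_f_is_kernel
    refine KernelFork.IsLimit.ofι' _ _ (fun {A} k hk => ?_)
    have h1 : (k ≫ pullback.fst p f) ≫ p = 0 := by
      rw [Category.assoc, pullback.condition, reassoc_of% hk, zero_comp]
    have : Mono (ShortComplex.mk i p w).f := hT.mono_f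
    refine ⟨hT.exact.lift (k ≫ pullback.fst p f) h1, ?_⟩
    have h2 := hT.exact.lift_f (k ≫ pullback.fst p f) h1
    apply pullback.hom_ext
    · simpa using h2
    · simpa using hk.symm
  · exact E.admEpi_pullback p f ⟨_, _, _, hc⟩

lemma pushout_conflation {K P A : 𝒜} (i : K ⟶ P) (p : P ⟶ A) (w : i ≫ p = 0)
    (hc : E.conflation (ShortComplex.mk i p w)) {N : 𝒜} (f : K ⟶ N) :
    E.conflation (ShortComplex.mk (pushout.inr i f)
      (pushout.desc p (0 : N ⟶ A) (by simp [w])) (by simp)) := by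
  have hT := E.shortExact_of_conflation _ hc
  have : Mono i := hT.mono_f
  have : Epi p := hT.epi_g
  apply conflation_of_admMono
  · have he : Epi (pushout.desc p (0 : N ⟶ A) (by simp [w]) : pushout i f ⟶ A) := by
      have : Epi (pushout.inl i f ≫
        (pushout.desc p (0 : N ⟶ A) (by simp [w]) : pushout i f ⟶ A)) := by simpa
      exact epi_of_epi (pushout.inl i f) _
    have hm : Mono (pushout.inr i f) := inferInstance
    refine ShortComplex.ShortExact.mk' ?_ hm he
    apply ShortComplex.exact_of_g_is_cokernel
    refine CokernelCofork.IsColimit.ofπ' _ _ (fun {A} k hk => ?_)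
    have h1 : i ≫ (pushout.inl i f ≫ k) = 0 := by
      rw [pushout.condition_assoc, hk, comp_zero]
    have : Epi (ShortComplex.mk i p w).g := hT.epi_g
    refine ⟨hT.exact.desc (pushout.inl i f ≫ k) h1, ?_⟩
    have h2 := hT.exact.g_desc (pushout.inl i f ≫ k) h1
    apply pushout.hom_ext
    · simpa using h2
    · simpa using hk.symm
  · exact E.admMono_pushout i f ⟨_, _, _, hc⟩

/-- A short exact sequence mapping to a conflation with iso on the left is a conflation. -/
lemma conflation_of_hom_to {A Z X J C : 𝒜} (a : A ⟶ Z) (b : Z ⟶ X) (w : a ≫ b = 0)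
    (hS : (ShortComplex.mk a b w).ShortExact) (i : A ⟶ J) (p : J ⟶ C) (w' : i ≫ p = 0)
    (hc : E.conflation (ShortComplex.mk i p w')) (g : Z ⟶ J) (hg : a ≫ g = i) :
    E.conflation (ShortComplex.mk a b w) := by
  have h0 : a ≫ (g ≫ p) = 0 := by rw [reassoc_of% hg, w']
  obtain ⟨h, hh⟩ := se_desc hS (g ≫ p) h0
  have hp := pullback_conflation E i p w' hc h
  let φ : ShortComplex.mk a b w ⟶ ShortComplex.mk (pullback.lift i (0 : A ⟶ X) (by simp [w']))
      (pullback.snd p h) (by simp) :=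
    { τ₁ := 𝟙 _
      τ₂ := pullback.lift g b hh.symm
      τ₃ := 𝟙 _
      comm₁₂ := by
        apply pullback.hom_ext
        · simp [hg]
        · simp [w]
      comm₂₃ := by simp }
  have h1 : IsIso φ.τ₁ := by dsimp [φ]; infer_instance
  have h3 : IsIso φ.τ₃ := by dsimp [φ]; infer_instance
  have h2 : IsIso φ.τ₂ := ShortComplex.isIso₂_of_shortExact_of_isIso₁₃ φ hS
    (E.shortExact_of_conflation _ hp)
  have : IsIso φ := ShortComplex.isIso_of_isIso φ
  exact E.conflation_of_iso _ _ (asIso φ).symm hp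

/-- A short exact sequence receiving a conflation with iso on the right is a conflation. -/
lemma conflation_of_hom_from {N D A K P : 𝒜} (a : N ⟶ D) (b : D ⟶ A) (w : a ≫ b = 0)
    (hS : (ShortComplex.mk a b w).ShortExact) (i : K ⟶ P) (p : P ⟶ A) (w' : i ≫ p = 0)
    (hc : E.conflation (ShortComplex.mk i p w')) (g : P ⟶ D) (hg : g ≫ b = p) :
    E.conflation (ShortComplex.mk a b w) := by
  have h0 : (i ≫ g) ≫ b = 0 := by rw [Category.assoc, hg, w']
  obtain ⟨h, hh⟩ := se_lift hS (i ≫ g) h0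
  have hp := pushout_conflation E i p w' hc h
  let φ : ShortComplex.mk (pushout.inr i h)
      (pushout.desc p (0 : N ⟶ A) (by simp [w'])) (by simp) ⟶ ShortComplex.mk a b w :=
    { τ₁ := 𝟙 _
      τ₂ := pushout.desc g a hh.symm
      τ₃ := 𝟙 _
      comm₁₂ := by simp
      comm₂₃ := by
        apply pushout.hom_ext
        · simp [hg]
        · simp [w] }
  have h1 : IsIso φ.τ₁ := by dsimp [φ]; infer_instance
  have h3 : IsIso φ.τ₃ := by dsimp [φ]; infer_instance
  have h2 : IsIso φ.τ₂ := ShortComplex.isIso₂_of_shortExact_of_isIso₁₃ φ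
    (E.shortExact_of_conflation _ hp) hS
  have : IsIso φ := ShortComplex.isIso_of_isIso φ
  exact E.conflation_of_iso _ _ (asIso φ) hp

section Inj

variable {E} {N J C : 𝒜} {i : N ⟶ J} {p : J ⟶ C} {w : i ≫ p = 0}

lemma lift_of_ext1Zero
    (hc : E.conflation (ShortComplex.mk i p w))
    {M : 𝒜} (h : E.Ext1Zero M N) (f : M ⟶ C) : ∃ g : M ⟶ J, g ≫ p = f := by
  have hp := pullback_conflation E i p w hc f
  obtain ⟨r, hr⟩ := h _ _ _ _ hp
  have hS := E.shortExact_of_conflation _ hp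
  -- section of `pullback.snd`
  have h0 : pullback.lift i (0 : N ⟶ M) (by simp [w]) ≫
      (𝟙 (pullback p f) - r ≫ pullback.lift i (0 : N ⟶ M) (by simp [w])) = 0 := by
    rw [Preadditive.comp_sub, reassoc_of% hr]; simp
  obtain ⟨s, hs⟩ := se_desc hS _ h0
  have : Epi (pullback.snd p f) := hS.epi_g
  refine ⟨s ≫ pullback.fst p f, ?_⟩
  rw [Category.assoc, pullback.condition, ← cancel_epi (pullback.snd p f), reassoc_of% hs]
  simp

lemma ext1Zero_of_lift
    (hc : E.conflation (ShortComplex.mk i p w)) (hJ : E.EInjective J)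
    {M : 𝒜} (h : ∀ f : M ⟶ C, ∃ g : M ⟶ J, g ≫ p = f) : E.Ext1Zero M N := by
  intro Z a b wab hab
  obtain ⟨k, hk⟩ := hJ _ hab i
  dsimp at k hk
  have hS := E.shortExact_of_conflation _ hab
  have hT := E.shortExact_of_conflation _ hc
  have : Mono i := hT.mono_f
  have h0 : a ≫ (k ≫ p) = 0 := by rw [reassoc_of% hk, w]
  obtain ⟨d, hd⟩ := se_desc hS _ h0
  obtain ⟨g, hg⟩ := h d
  have h1 : (k - b ≫ g) ≫ p = 0 := by
    rw [Preadditive.sub_comp, Category.assoc, hg, hd, sub_self]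
  obtain ⟨l, h2⟩ := se_lift hT _ h1
  refine ⟨l, ?_⟩
  rw [← cancel_mono i, Category.assoc, h2, Preadditive.comp_sub, hk, reassoc_of% wab]
  simp

/-- Maps into `N` extend along inflations whose cokernel is orthogonal to `N`. -/
lemma extend_of_ext1Zero
    (hc : E.conflation (ShortComplex.mk i p w)) (hJ : E.EInjective J)
    {A B M : 𝒜} {a : A ⟶ B} {b : B ⟶ M} {w' : a ≫ b = 0}
    (hab : E.conflation (ShortComplex.mk a b w')) (h : E.Ext1Zero M N) (f : A ⟶ N) :
    ∃ g : B ⟶ N, a ≫ g = f := by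
  obtain ⟨k, hk⟩ := hJ _ hab (f ≫ i)
  dsimp at k hk
  have hS := E.shortExact_of_conflation _ hab
  have hT := E.shortExact_of_conflation _ hc
  have : Mono i := hT.mono_f
  have h0 : a ≫ (k ≫ p) = 0 := by rw [reassoc_of% hk, w, comp_zero]
  obtain ⟨d, hd⟩ := se_desc hS _ h0
  obtain ⟨g, hg⟩ := lift_of_ext1Zero hc h d
  have h1 : (k - b ≫ g) ≫ p = 0 := by
    rw [Preadditive.sub_comp, Category.assoc, hg, hd, sub_self]
  obtain ⟨l, h2⟩ := se_lift hT _ h1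
  refine ⟨l, ?_⟩
  rw [← cancel_mono i, Category.assoc, h2, Preadditive.comp_sub, hk, reassoc_of% w']
  simp

/-- Lifts extend along inflations whose cokernel has the lifting property. -/
lemma lift_step
    (hJ : E.EInjective J)
    {A B M : 𝒜} {a : A ⟶ B} {b : B ⟶ M} {w' : a ≫ b = 0}
    (hab : E.conflation (ShortComplex.mk a b w'))
    (h : ∀ f : M ⟶ C, ∃ g : M ⟶ J, g ≫ p = f) (s : A ⟶ J) (f : B ⟶ C) (hs : s ≫ p = a ≫ f) :
    ∃ t : B ⟶ J, a ≫ t = s ∧ t ≫ p = f := by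
  obtain ⟨k, hk⟩ := hJ _ hab s
  dsimp at k hk
  have hS := E.shortExact_of_conflation _ hab
  have h0 : a ≫ (f - k ≫ p) = 0 := by
    rw [Preadditive.comp_sub, reassoc_of% hk, hs, sub_self]
  obtain ⟨d, hd⟩ := se_desc hS _ h0
  obtain ⟨g, hg⟩ := h d
  refine ⟨k + b ≫ g, ?_, ?_⟩
  · rw [Preadditive.comp_add, hk, reassoc_of% w']; simp
  · rw [Preadditive.add_comp, Category.assoc, hg, hd]; simp

end Inj

lemma ext1Zero_of_extend {E : ExactStructure 𝒜} {N K P S : 𝒜} {i : K ⟶ P} {p : P ⟶ S}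
    {w : i ≫ p = 0} (hc : E.conflation (ShortComplex.mk i p w)) (hP : E.EProjective P)
    (h : ∀ f : K ⟶ N, ∃ g : P ⟶ N, i ≫ g = f) : E.Ext1Zero S N := by
  intro Z a b wab hab
  obtain ⟨k, hk⟩ := hP _ hab p
  dsimp at k hk
  have hS := E.shortExact_of_conflation _ hab
  have hT := E.shortExact_of_conflation _ hc
  have : Mono a := hS.mono_f
  have : Epi p := hT.epi_g
  have h0 : (i ≫ k) ≫ b = 0 := by rw [Category.assoc, hk, w]
  obtain ⟨l, hl⟩ := se_lift hS _ h0
  obtain ⟨g, hg⟩ := h l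
  have h1 : i ≫ (k - g ≫ a) = 0 := by
    rw [Preadditive.comp_sub, ← Category.assoc, hg, hl, sub_self]
  -- `s` is a section of `b`
  obtain ⟨s, hs⟩ := se_desc hT _ h1
  have hsb : s ≫ b = 𝟙 _ := by
    rw [← cancel_epi p, ← Category.assoc, hs, Preadditive.sub_comp, hk, Category.assoc, wab]
    simp
  have h2 : (𝟙 Z - b ≫ s) ≫ b = 0 := by
    rw [Preadditive.sub_comp, Category.assoc, hsb]; simp
  obtain ⟨l', h3⟩ := se_lift hS _ h2
  refine ⟨l', ?_⟩
  rw [← cancel_mono a, Category.assoc, h3, Preadditive.comp_sub, reassoc_of% wab]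
  simp

lemma ext1Zero_of_projective {E : ExactStructure 𝒜} {P N : 𝒜} (hP : E.EProjective P) :
    E.Ext1Zero P N := by
  have hs : E.conflation (ShortComplex.mk (0 : (⊥_ 𝒜) ⟶ P) (𝟙 P) (by simp)) :=
    E.conflation_of_splitting _
      { r := 0, s := 𝟙 P, f_r := (initialIsInitial (C := 𝒜)).hom_ext _ _ }
  exact ext1Zero_of_extend hs hP (fun f => ⟨0, (initialIsInitial (C := 𝒜)).hom_ext _ _⟩)

lemma ext1Zero_of_iso (hinj : E.EnoughInjectives) {M M' N : 𝒜} (e : M ≅ M')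
    (h : E.Ext1Zero M N) : E.Ext1Zero M' N := by
  obtain ⟨J, C, i, p, w', hc, hJ⟩ := hinj N
  refine ext1Zero_of_lift hc hJ (fun φ => ?_)
  obtain ⟨s, hs⟩ := lift_of_ext1Zero hc h (e.hom ≫ φ)
  exact ⟨e.inv ≫ s, by rw [Category.assoc, hs, e.inv_hom_id_assoc]⟩

lemma resolving_leftPerp (hinj : E.EnoughInjectives) (𝒴 : Set 𝒜)
    (hcosyz : ∀ Y ∈ 𝒴, ∀ (I C : 𝒜) (i : Y ⟶ I) (p : I ⟶ C)
      (w : i ≫ p = 0), E.conflation (ShortComplex.mk i p w) → E.EInjective I → C ∈ 𝒴) :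
    E.Resolving (E.leftPerp 𝒴) := by
  refine ⟨fun P hP Y _ => ext1Zero_of_projective hP, ?_, ?_⟩
  · rintro ⟨f, g, w⟩ hS h1 h3 Y hY
    obtain ⟨J, C, i, p, w', hc, hJ⟩ := hinj Y
    refine ext1Zero_of_lift hc hJ (fun φ => ?_)
    obtain ⟨s, hs⟩ := lift_of_ext1Zero hc (h1 Y hY) (f ≫ φ)
    obtain ⟨t, -, ht⟩ := lift_step hJ hS (fun φ => lift_of_ext1Zero hc (h3 Y hY) φ) s φ hs
    exact ⟨t, ht⟩
  · rintro ⟨f, g, w⟩ hS h2 h3 Y hY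
    obtain ⟨J, C, i, p, w', hc, hJ⟩ := hinj Y
    refine ext1Zero_of_lift hc hJ (fun φ => ?_)
    have hC := hcosyz Y hY J C i p w' hc hJ
    obtain ⟨J', C', i', p', w'', hc', hJ'⟩ := hinj C
    obtain ⟨ψ, hψ⟩ := extend_of_ext1Zero hc' hJ' hS (h3 C hC) φ
    obtain ⟨s, hs⟩ := lift_of_ext1Zero hc (h2 Y hY) ψ
    exact ⟨f ≫ s, by rw [Category.assoc, hs, hψ]⟩

lemma leftPerp_eq (𝒴 : Set 𝒜) :
    E.leftPerp 𝒴 = E.leftPerp (E.rightPerp (E.leftPerp 𝒴)) := by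
  apply Set.Subset.antisymm
  · intro X hX Y hY
    exact hY X hX
  · intro X hX Y hY
    exact hX Y (fun X' hX' => hX' Y hY)

end General

end ExactPaper

namespace ExactPaper

section SmallObject

open MorphismProperty

lemma hasSmallObjectArgument_of_mono {𝒞 : Type v} [Category.{u} 𝒞] [Abelian 𝒞]
    [IsGrothendieckAbelian.{u} 𝒞] {ι : Type u} {A B : ι → 𝒞} (f : ∀ i, A i ⟶ B i)
    (hf : ∀ i, Mono (f i)) : HasSmallObjectArgument.{u} (MorphismProperty.ofHoms f) := by
  obtain ⟨κ, hκ', hκ⟩ := HasCardinalLT.exists_regular_cardinal.{u} (Σ i, Subobject (A i))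
  have : Fact κ.IsRegular := ⟨hκ'⟩
  have : Nonempty κ.ord.ToType := by simpa using hκ'.ne_zero
  have := WellFoundedLT.toOrderBot κ.ord.ToType
  have hle : MorphismProperty.ofHoms f ≤ monomorphisms 𝒞 := by
    rintro _ _ _ ⟨i⟩
    exact hf i
  have hsm : IsSmall.{u} (MorphismProperty.ofHoms f) := isSmall_ofHoms f
  exact ⟨κ, inferInstance, inferInstance,
    { preservesColimit {A' B' X Y} i hi g hg := by
        let hf' : (monomorphisms 𝒞).TransfiniteCompositionOfShape κ.ord.ToType g :=
          { toTransfiniteCompositionOfShape := hg.toTransfiniteCompositionOfShape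
            map_mem j hj := by
              have := (hg.attachCells j hj).pushouts_coproducts
              simp only [ofHoms_homFamily] at this
              refine (?_ : _ ≤ monomorphisms 𝒞) _ this
              simp only [pushouts_le_iff, coproducts_le_iff]
              exact hle }
        have (j j' : κ.ord.ToType) (φ : j ⟶ j') : Mono (hf'.F.map φ) := hf'.mem_map φ
        apply IsGrothendieckAbelian.preservesColimit_coyoneda_obj_of_mono (Y := hf'.F) (κ := κ)
        obtain ⟨i⟩ := hi
        exact hκ.of_injective (fun s => (⟨i, s⟩ : Σ i, Subobject (A i)))
          (fun a b h => by simpa using h) }⟩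

/-- Completeness of a cotorsion pair generated by a small family. -/
lemma complete_of_small {𝒞 : Type v} [Category.{u} 𝒞] [Abelian 𝒞]
    [IsGrothendieckAbelian.{u} 𝒞] (E : ExactStructure 𝒞)
    (hproj : E.EnoughProjectives) (hinj : E.EnoughInjectives) (𝒳 : Set 𝒞)
    (h𝒳 : E.leftPerp (E.rightPerp 𝒳) ⊆ 𝒳)
    {ι : Type u} (S : ι → 𝒞) (hS : ∀ i, S i ∈ 𝒳)
    (hgen : ∀ N, (∀ i, E.Ext1Zero (S i) N) → N ∈ E.rightPerp 𝒳) :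
    (∀ A : 𝒞, ∃ (Y X : 𝒞) (i : Y ⟶ X) (p : X ⟶ A) (w : i ≫ p = 0),
      E.conflation (ShortComplex.mk i p w) ∧ X ∈ 𝒳 ∧ Y ∈ E.rightPerp 𝒳) ∧
    (∀ A : 𝒞, ∃ (Y' X' : 𝒞) (i : A ⟶ Y') (p : Y' ⟶ X') (w : i ≫ p = 0),
      E.conflation (ShortComplex.mk i p w) ∧ X' ∈ 𝒳 ∧ Y' ∈ E.rightPerp 𝒳) := by
  choose K P k q wkq hkq hP using fun i => hproj (S i)
  have hmono : ∀ i, Mono (k i) := fun i => (E.shortExact_of_conflation _ (hkq i)).mono_f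
  have hso := hasSmallObjectArgument_of_mono k hmono
  set I := MorphismProperty.ofHoms k with hI
  -- the epimorphisms `J ⟶ C` with kernel in `𝒳^⊥` and `J` injective are in `I.rlp`
  have hrlp : ∀ {N J C : 𝒞} {i : N ⟶ J} {p : J ⟶ C} {w : i ≫ p = 0},
      E.conflation (ShortComplex.mk i p w) → E.EInjective J → N ∈ E.rightPerp 𝒳 → I.rlp p := by
    rintro N J C i p w hc hJ hN _ _ _ ⟨j⟩
    refine ⟨fun {f g} sq => ?_⟩
    obtain ⟨t, ht1, ht2⟩ := lift_step (p := p) hJ (hkq j)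
      (fun φ => lift_of_ext1Zero hc (hN _ (hS j)) φ) f g sq.w
    exact ⟨⟨⟨t, ht1, ht2⟩⟩⟩
  have hrlp0 : ∀ {J : 𝒞}, E.EInjective J → I.rlp (0 : J ⟶ ⊤_ 𝒞) := by
    rintro J hJ _ _ _ ⟨j⟩
    refine ⟨fun {f g} sq => ?_⟩
    obtain ⟨t, ht⟩ := hJ _ (hkq j) f
    exact ⟨⟨⟨t, ht, (terminalIsTerminal (C := 𝒞)).hom_ext _ _⟩⟩⟩
  refine ⟨fun A => ?_, fun A => ?_⟩
  · obtain ⟨K', P', k', q', w', hc', hP'⟩ := hproj A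
    let F := factorizationData I.rlp.llp I.rlp q'
    have hq' : Epi q' := (E.shortExact_of_conflation _ hc').epi_g
    have hfac : F.i ≫ F.p = q' := F.fac
    have hepi : Epi F.p := by
      have : Epi (F.i ≫ F.p) := by rw [hfac]; exact hq'
      exact epi_of_epi F.i F.p
    have hse : (ShortComplex.mk (kernel.ι F.p) F.p (kernel.condition _)).ShortExact :=
      ShortComplex.ShortExact.mk' (ShortComplex.exact_kernel _) inferInstance hepi
    refine ⟨kernel F.p, F.Z, kernel.ι F.p, F.p, kernel.condition _, ?_, ?_, ?_⟩
    · exact conflation_of_hom_from E _ _ _ hse k' q' w' hc' F.i hfac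
    · refine h𝒳 (fun N hN => ?_)
      obtain ⟨J, C, i, p, w, hc, hJ⟩ := hinj N
      refine ext1Zero_of_lift hc hJ (fun φ => ?_)
      obtain ⟨s, hs⟩ := hP' _ hc (F.i ≫ φ)
      have hlift := F.hi _ (hrlp hc hJ hN)
      have sq : CommSq s F.i p φ := ⟨hs⟩
      exact ⟨sq.lift, sq.fac_right⟩
    · refine hgen _ (fun j => ext1Zero_of_extend (hkq j) (hP j) (fun f => ?_))
      have hlift := F.hp _ (MorphismProperty.ofHoms.mk (f := k) j)
      have sq : CommSq (f ≫ kernel.ι F.p) (k j) F.p 0 := ⟨by simp⟩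
      refine ⟨kernel.lift F.p sq.lift sq.fac_right, ?_⟩
      rw [← cancel_mono (kernel.ι F.p), Category.assoc, kernel.lift_ι, sq.fac_left]
  · let F := factorizationData I.rlp.llp I.rlp (0 : A ⟶ ⊤_ 𝒞)
    obtain ⟨J', C', i', p', w', hc', hJ'⟩ := hinj A
    have hlift := F.hi _ (hrlp0 hJ')
    have sq : CommSq i' F.i (0 : J' ⟶ ⊤_ 𝒞) 0 := ⟨by simp⟩
    have hmi : Mono F.i := by
      have : Mono (F.i ≫ sq.lift) := by
        rw [sq.fac_left]; exact (E.shortExact_of_conflation _ hc').mono_f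
      exact mono_of_mono F.i sq.lift
    have hse : (ShortComplex.mk F.i (cokernel.π F.i) (cokernel.condition _)).ShortExact :=
      ShortComplex.ShortExact.mk' (ShortComplex.exact_cokernel _) hmi inferInstance
    refine ⟨F.Z, cokernel F.i, F.i, cokernel.π F.i, cokernel.condition _, ?_, ?_, ?_⟩
    · exact conflation_of_hom_to E _ _ _ hse i' p' w' hc' sq.lift sq.fac_left
    · refine h𝒳 (fun N hN => ?_)
      obtain ⟨J, C, i, p, w, hc, hJ⟩ := hinj N
      refine ext1Zero_of_lift hc hJ (fun φ => ?_)
      have hlift := F.hi _ (hrlp hc hJ hN)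
      have sq : CommSq (0 : A ⟶ J) F.i p (cokernel.π F.i ≫ φ) := ⟨by simp⟩
      refine ⟨cokernel.desc F.i sq.lift sq.fac_left, ?_⟩
      rw [← cancel_epi (cokernel.π F.i), cokernel.π_desc_assoc, sq.fac_right]
    · refine hgen _ (fun j => ext1Zero_of_extend (hkq j) (hP j) (fun f => ?_))
      have hlift := F.hp _ (MorphismProperty.ofHoms.mk (f := k) j)
      have sq : CommSq f (k j) F.p 0 := ⟨(terminalIsTerminal (C := 𝒞)).hom_ext _ _⟩
      exact ⟨sq.lift, sq.fac_left⟩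

end SmallObject

end ExactPaper

namespace ExactPaper

section Purity

variable {T : Type u} [Ring T]

/-- Purity of a submodule via solvability of finite linear systems. -/
def EqPure {X : Type u} [AddCommGroup X] [Module T X] (P : Submodule T X) : Prop :=
  ∀ (n m : ℕ) (r : Fin m → Fin n → T) (p : Fin m → X), (∀ i, p i ∈ P) →
    (∃ x : Fin n → X, ∀ i, ∑ j, r i j • x j = p i) →
    ∃ x : Fin n → X, (∀ j, x j ∈ P) ∧ ∀ i, ∑ j, r i j • x j = p i

lemma EqPure.exists_lift {X Z F : Type u} [AddCommGroup X] [Module T X] [AddCommGroup Z]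
    [Module T Z] [AddCommGroup F] [Module T F] (g : X →ₗ[T] Z) (hg : Function.Surjective g)
    (hP : EqPure (LinearMap.ker g)) (hF : Module.FinitePresentation T F) (h : F →ₗ[T] Z) :
    ∃ k : F →ₗ[T] X, g ∘ₗ k = h := by
  obtain ⟨n, K, e, hK⟩ := Module.FinitePresentation.exists_fin T F
  obtain ⟨m, s, hs⟩ := Submodule.fg_iff_exists_fin_generating_family.1 hK
  let h' : (Fin n → T) →ₗ[T] Z := h ∘ₗ e.symm.toLinearMap ∘ₗ K.mkQ
  choose y hy using fun j => hg (h' (Pi.single j 1))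
  have hlc : ∀ v : Fin n → T, g (Fintype.linearCombination T y v) = h' v := by
    intro v
    have : g ∘ₗ Fintype.linearCombination T y = h' := by
      apply LinearMap.pi_ext'
      intro j
      ext
      simp [hy]
    exact LinearMap.congr_fun this v
  have hK0 : ∀ v ∈ K, h' v = 0 := by
    intro v hv
    simp [h', (Submodule.Quotient.mk_eq_zero K).2 hv]
  have hsK : ∀ i, s i ∈ K := fun i => hs ▸ Submodule.subset_span ⟨i, rfl⟩
  obtain ⟨x, hx, hx'⟩ := hP n m s (fun i => Fintype.linearCombination T y (s i))
    (fun i => by rw [LinearMap.mem_ker, hlc, hK0 _ (hsK i)])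
    ⟨y, fun i => by simp [Fintype.linearCombination_apply]⟩
  let φ : (Fin n → T) →ₗ[T] X := Fintype.linearCombination T y - Fintype.linearCombination T x
  have hφ : K ≤ LinearMap.ker φ := by
    rw [← hs, Submodule.span_le]
    rintro _ ⟨i, rfl⟩
    have := hx' i
    simp only [SetLike.mem_coe, LinearMap.mem_ker, φ, LinearMap.sub_apply, sub_eq_zero]
    rw [← this, Fintype.linearCombination_apply]
  have hgφ : ∀ v, g (φ v) = h' v := by
    intro v
    have hz : g (Fintype.linearCombination T x v) = 0 := by
      rw [Fintype.linearCombination_apply, map_sum]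
      exact Finset.sum_eq_zero (fun j _ => by rw [map_smul, LinearMap.mem_ker.1 (hx j), smul_zero])
    simp only [φ, LinearMap.sub_apply, map_sub, hlc, hz, sub_zero]
  refine ⟨K.liftQ φ hφ ∘ₗ e.toLinearMap, ?_⟩
  ext z
  obtain ⟨v, hv⟩ := K.mkQ_surjective (e z)
  have hz : z = e.symm (K.mkQ v) := by rw [hv]; simp
  rw [LinearMap.comp_apply, LinearMap.comp_apply]
  change g (K.liftQ φ hφ (e z)) = _
  rw [← hv]
  change g (K.liftQ φ hφ (Submodule.Quotient.mk v)) = _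
  rw [Submodule.liftQ_apply, hgφ, hz]
  rfl

lemma eqPure_bot {X : Type u} [AddCommGroup X] [Module T X] : EqPure (⊥ : Submodule T X) := by
  intro n m r p hp _
  refine ⟨0, fun j => by simp, fun i => ?_⟩
  have := hp i
  simp only [Submodule.mem_bot] at this
  simp [this]

lemma EqPure.comap_mkQ {X : Type u} [AddCommGroup X] [Module T X] {D : Submodule T X}
    (hD : EqPure D) {P : Submodule T (X ⧸ D)} (hP : EqPure P) : EqPure (P.comap D.mkQ) := by
  rintro n m r p hp ⟨x, hx⟩
  obtain ⟨x', hx', hx''⟩ := hP n m r (fun i => D.mkQ (p i)) hp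
    ⟨fun j => D.mkQ (x j), fun i => by rw [← hx i, map_sum]; simp⟩
  choose y hy using fun j => D.mkQ_surjective (x' j)
  obtain ⟨z, hz, hz'⟩ := hD n m r (fun i => p i - ∑ j, r i j • y j) (fun i => by
      rw [← Submodule.ker_mkQ D, LinearMap.mem_ker, map_sub, ← hx'' i, map_sum]
      simp only [map_smul, hy, sub_self])
    ⟨fun j => x j - y j, fun i => by simp only [smul_sub, Finset.sum_sub_distrib, hx]⟩
  refine ⟨fun j => y j + z j, fun j => ?_, fun i => ?_⟩
  · rw [Submodule.mem_comap, map_add, hy]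
    have : D.mkQ (z j) = 0 := by
      rw [← LinearMap.mem_ker, Submodule.ker_mkQ]; exact hz j
    rw [this, add_zero]
    exact hx' j
  · simp only [smul_add, Finset.sum_add_distrib, hz']
    abel

/-- Purity passes to intermediate submodules. -/
lemma EqPure.comap_subtype {X : Type u} [AddCommGroup X] [Module T X] {D : Submodule T X}
    (hD : EqPure D) (Q : Submodule T X) (hDQ : D ≤ Q) : EqPure (D.comap Q.subtype) := by
  rintro n m r p hp ⟨x, hx⟩
  obtain ⟨z, hz, hz'⟩ := hD n m r (fun i => (p i : X)) hp
    ⟨fun j => (x j : X), fun i => by rw [← hx i]; simp⟩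
  exact ⟨fun j => ⟨z j, hDQ (hz j)⟩, hz, fun i => by
    apply Subtype.ext
    simpa using hz' i⟩

lemma eqPure_iUnion {X : Type u} [AddCommGroup X] [Module T X] (c : Set (Submodule T X))
    (hne : c.Nonempty) (hc : DirectedOn (· ≤ ·) c) (h : ∀ P ∈ c, EqPure P) :
    EqPure (sSup c) := by
  rintro n m r p hp hx
  have hmem : ∀ i, ∃ P : c, p i ∈ P.1 := fun i => by
    obtain ⟨P, hP, hpP⟩ := (Submodule.mem_sSup_of_directed hne hc).1 (hp i)
    exact ⟨⟨P, hP⟩, hpP⟩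
  choose P hP using hmem
  have : Nonempty c := hne.to_subtype
  have hdir : Directed (· ≤ ·) (fun P : c => (P : Submodule T X)) := hc.directed_val
  obtain ⟨Q, hQ⟩ := hdir.finite_le P
  obtain ⟨x, hx1, hx2⟩ := h Q.1 Q.2 n m r p (fun i => hQ i (hP i)) hx
  exact ⟨x, fun j => le_sSup Q.2 (hx1 j), hx2⟩

/-- Terms used to bound the size of pure closures. -/
inductive Tm (T : Type u) : Type u
  | var : Tm T
  | zero : Tm T
  | add : Tm T → Tm T → Tm T
  | smul : T → Tm T → Tm T
  | sol (n m : ℕ) (r : Fin m → Fin n → T) (p : Fin m → Tm T) (j : Fin n) : Tm T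

/-- Evaluation of terms. -/
def Tm.eval {X : Type u} [AddCommGroup X] [Module T X] (x : X)
    (σ : ∀ n m : ℕ, (Fin m → Fin n → T) → (Fin m → X) → Fin n → X) : Tm T → X
  | .var => x
  | .zero => 0
  | .add a b => a.eval x σ + b.eval x σ
  | .smul r a => r • a.eval x σ
  | .sol n m r p j => σ n m r (fun i => (p i).eval x σ) j

/-- Index type for small modules. -/
structure SmallIdx (T : Type u) [Ring T] : Type u where
  s : Setoid (Tm T)
  grp : AddCommGroup (Quotient s)
  mod : Module T (Quotient s)

/-- The small module with the given index. -/
def SmallIdx.toMod (i : SmallIdx T) : ModuleCat.{u} T :=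
  letI := i.grp
  letI := i.mod
  ModuleCat.of T (Quotient i.s)

lemma exists_small_pure {X : Type u} [AddCommGroup X] [Module T X] (x : X) :
    ∃ P : Submodule T X, EqPure P ∧ x ∈ P ∧ ∃ i : SmallIdx T,
      Nonempty (i.toMod ≅ ModuleCat.of T P) := by
  classical
  let σ : ∀ n m : ℕ, (Fin m → Fin n → T) → (Fin m → X) → Fin n → X := fun n m r p =>
    if h : ∃ y : Fin n → X, ∀ i, ∑ j, r i j • y j = p i then h.choose else 0
  have hσ : ∀ n m r p, (∃ y : Fin n → X, ∀ i : Fin m, ∑ j, r i j • y j = p i) →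
      ∀ i, ∑ j, r i j • σ n m r p j = p i := by
    intro n m r p h
    simp only [σ, dif_pos h]
    exact h.choose_spec
  let P : Submodule T X :=
    { carrier := Set.range (Tm.eval x σ)
      add_mem' := by
        rintro _ _ ⟨a, rfl⟩ ⟨b, rfl⟩
        exact ⟨.add a b, rfl⟩
      zero_mem' := ⟨.zero, rfl⟩
      smul_mem' := by
        rintro r _ ⟨a, rfl⟩
        exact ⟨.smul r a, rfl⟩ }
  refine ⟨P, ?_, ⟨.var, rfl⟩, ?_⟩
  · intro n m r p hp hy
    choose t ht using hp
    refine ⟨σ n m r p, fun j => ⟨.sol n m r t j, ?_⟩, hσ n m r p hy⟩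
    simp only [Tm.eval, ht]
  · let e : Quotient (Setoid.ker (Tm.eval x σ)) ≃ P :=
      Setoid.quotientKerEquivRange (Tm.eval x σ)
    let g : AddCommGroup (Quotient (Setoid.ker (Tm.eval x σ))) := e.addCommGroup
    let md : Module T (Quotient (Setoid.ker (Tm.eval x σ))) := e.module T
    let le : Quotient (Setoid.ker (Tm.eval x σ)) ≃ₗ[T] P := e.linearEquiv T
    exact ⟨⟨Setoid.ker (Tm.eval x σ), g, md⟩, ⟨le.toModuleIso⟩⟩

end Purity

section Generate

variable {R : Type u} [Ring R]

lemma pureSES_of {A B C : Type u} [AddCommGroup A] [Module Rᵐᵒᵖ A] [AddCommGroup B]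
    [Module Rᵐᵒᵖ B] [AddCommGroup C] [Module Rᵐᵒᵖ C] (f : A →ₗ[Rᵐᵒᵖ] B) (g : B →ₗ[Rᵐᵒᵖ] C)
    (hf : Function.Injective f) (hg : Function.Surjective g) (hfg : Function.Exact f g)
    (hp : EqPure (LinearMap.ker g))
    (w : ModuleCat.ofHom f ≫ ModuleCat.ofHom g = 0) :
    PureSES (ShortComplex.mk (ModuleCat.ofHom f) (ModuleCat.ofHom g) w) := by
  refine ⟨ShortComplex.ShortExact.mk' ?_ ?_ ?_, ?_⟩
  · rw [ShortComplex.ShortExact.moduleCat_exact_iff_function_exact]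
    exact hfg
  · exact (ModuleCat.mono_iff_injective _).2 hf
  · exact (ModuleCat.epi_iff_surjective _).2 hg
  · intro F hF h
    obtain ⟨k, hk⟩ := EqPure.exists_lift g hg hp hF h.hom
    exact ⟨ModuleCat.ofHom k, by ext1; exact hk⟩

lemma ofHom_zero {A B C : Type u} [AddCommGroup A] [Module Rᵐᵒᵖ A] [AddCommGroup B]
    [Module Rᵐᵒᵖ B] [AddCommGroup C] [Module Rᵐᵒᵖ C] (f : A →ₗ[Rᵐᵒᵖ] B) (g : B →ₗ[Rᵐᵒᵖ] C)
    (hfg : Function.Exact f g) : ModuleCat.ofHom f ≫ ModuleCat.ofHom g = 0 := by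
  ext x
  exact hfg.apply_apply_eq_zero x

variable (E : ExactStructure (ModuleCat.{u} Rᵐᵒᵖ))

lemma pureQuot_mem (hinj : E.EnoughInjectives)
    (𝒴 : Set (ModuleCat.{u} Rᵐᵒᵖ)) (h𝒴 : ∀ Y ∈ 𝒴, PureInjective Y)
    (S : ShortComplex (ModuleCat.{u} Rᵐᵒᵖ)) (hS : PureSES S) (h2 : S.X₂ ∈ E.leftPerp 𝒴) :
    S.X₃ ∈ E.leftPerp 𝒴 := by
  intro Y hY
  obtain ⟨J, C, i, p, w, hc, hJ⟩ := hinj Y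
  refine ext1Zero_of_lift hc hJ (fun φ => ?_)
  obtain ⟨s, hs⟩ := lift_of_ext1Zero hc (h2 Y hY) (S.g ≫ φ)
  have hT := E.shortExact_of_conflation _ hc
  obtain ⟨l, hl⟩ := se_lift hT (S.f ≫ s) (by rw [Category.assoc, hs, S.zero_assoc, zero_comp])
  obtain ⟨k, hk⟩ := h𝒴 Y hY S hS l
  have : Epi S.g := hS.1.epi_g
  obtain ⟨d, hd⟩ := se_desc (w := S.zero) hS.1 (s - k ≫ i) (by
    rw [Preadditive.comp_sub, ← Category.assoc S.f k i, hk, hl, sub_self])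
  refine ⟨d, ?_⟩
  rw [← cancel_epi S.g, ← Category.assoc, hd, Preadditive.sub_comp, hs, Category.assoc, w]
  simp

lemma generate
    (hpure : ∀ S : ShortComplex (ModuleCat.{u} Rᵐᵒᵖ), PureSES S → E.conflation S)
    (hinj : E.EnoughInjectives) (𝒳 : Set (ModuleCat.{u} Rᵐᵒᵖ))
    (hq : ∀ S : ShortComplex (ModuleCat.{u} Rᵐᵒᵖ), PureSES S → S.X₂ ∈ 𝒳 → S.X₃ ∈ 𝒳)
    (N : ModuleCat.{u} Rᵐᵒᵖ)
    (hN : ∀ (M : ModuleCat.{u} Rᵐᵒᵖ), M ∈ 𝒳 → ∀ P : Submodule Rᵐᵒᵖ M, EqPure P →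
      (∃ i : SmallIdx Rᵐᵒᵖ, Nonempty (i.toMod ≅ ModuleCat.of Rᵐᵒᵖ P)) →
      E.Ext1Zero (ModuleCat.of Rᵐᵒᵖ P) N) : N ∈ E.rightPerp 𝒳 := by
  intro X hX
  obtain ⟨J, C, i, p, w, hc, hJ⟩ := hinj N
  refine ext1Zero_of_lift hc hJ (fun f => ?_)
  let 𝒮 : Set (X →ₗ.[Rᵐᵒᵖ] J) :=
    {s | EqPure s.domain ∧ ∀ x : s.domain, p.hom (s x) = f.hom (x : X)}
  obtain ⟨s, hs⟩ : ∃ s, Maximal (· ∈ 𝒮) s := by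
    apply zorn_le₀
    intro c hc𝒮 hchain
    rcases c.eq_empty_or_nonempty with rfl | hne
    · refine ⟨⊥, ⟨eqPure_bot, ?_⟩, by simp⟩
      rintro ⟨x, hx⟩
      have hx0 : x = 0 := (Submodule.mem_bot Rᵐᵒᵖ).1 hx
      subst hx0
      have : (⟨0, hx⟩ : (⊥ : X →ₗ.[Rᵐᵒᵖ] J).domain) = 0 := rfl
      rw [this]
      simp
    · have hdir : DirectedOn (· ≤ ·) c := hchain.directedOn
      refine ⟨LinearPMap.sSup c hdir, ⟨?_, ?_⟩, fun t ht => LinearPMap.le_sSup hdir ht⟩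
      · refine eqPure_iUnion _ (hne.image _) ?_ ?_
        · rintro _ ⟨a, ha, rfl⟩ _ ⟨b, hb, rfl⟩
          obtain ⟨d, hd, h1, h2⟩ := hdir a ha b hb
          exact ⟨_, ⟨d, hd, rfl⟩, h1.1, h2.1⟩
        · rintro _ ⟨a, ha, rfl⟩
          exact (hc𝒮 ha).1
      · rintro ⟨x, hx⟩
        obtain ⟨t, ht, hxt⟩ := (LinearPMap.mem_domain_sSup_iff hne hdir).1 hx
        have h1 := (LinearPMap.le_sSup hdir ht).2 (x := ⟨x, hxt⟩) (y := ⟨x, hx⟩) rfl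
        rw [← h1]
        exact (hc𝒮 ht).2 ⟨x, hxt⟩
  obtain ⟨⟨hsp, hsf⟩, hmax⟩ := hs
  have htop : s.domain = ⊤ := by
    by_contra hne
    obtain ⟨x, -, hx⟩ := SetLike.exists_of_lt (lt_top_iff_ne_top.2 hne)
    let D := s.domain
    have hex0 : Function.Exact D.subtype D.mkQ := LinearMap.exact_subtype_mkQ D
    have hXD : ModuleCat.of Rᵐᵒᵖ (X ⧸ D) ∈ 𝒳 :=
      hq _ (pureSES_of D.subtype D.mkQ D.injective_subtype D.mkQ_surjective hex0
        (by rw [Submodule.ker_mkQ]; exact hsp) (ofHom_zero _ _ hex0)) hX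
    obtain ⟨P, hP, hxP, hPs⟩ := exists_small_pure (T := Rᵐᵒᵖ) (D.mkQ x)
    let Q := P.comap D.mkQ
    have hDQ : D ≤ Q := by
      intro d hd
      have : D.mkQ d = 0 := by rw [← LinearMap.mem_ker, Submodule.ker_mkQ]; exact hd
      change D.mkQ d ∈ P
      rw [this]
      exact P.zero_mem
    let b : Q →ₗ[Rᵐᵒᵖ] P := D.mkQ.restrict (p := Q) (q := P) (fun y hy => hy)
    have hker : LinearMap.ker b = D.comap Q.subtype := by
      ext y
      rw [LinearMap.mem_ker, Submodule.mem_comap, ← Subtype.coe_inj]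
      exact Submodule.Quotient.mk_eq_zero D (x := (y : X))
    have hex : Function.Exact (Submodule.inclusion hDQ) b := by
      rw [LinearMap.exact_iff, hker, Submodule.range_inclusion]
    have hsurj : Function.Surjective b := by
      rintro ⟨y, hy⟩
      obtain ⟨z, rfl⟩ := D.mkQ_surjective y
      exact ⟨⟨z, hy⟩, rfl⟩
    have hcon := hpure _ (pureSES_of (Submodule.inclusion hDQ) b
      (Submodule.inclusion_injective hDQ) hsurj hex
      (by rw [hker]; exact hsp.comap_subtype Q hDQ) (ofHom_zero _ _ hex))
    have hext := hN _ hXD P hP hPs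
    obtain ⟨t, ht1, ht2⟩ := lift_step (p := p) hJ hcon
      (fun φ => lift_of_ext1Zero hc hext φ)
      (ModuleCat.ofHom s.toFun : ModuleCat.of Rᵐᵒᵖ D ⟶ J) (ModuleCat.ofHom Q.subtype ≫ f) (by
        ext y
        exact hsf y)
    let s' : X →ₗ.[Rᵐᵒᵖ] J := ⟨Q, t.hom⟩
    have hs' : s' ∈ 𝒮 := by
      refine ⟨hsp.comap_mkQ hP, fun y => ?_⟩
      exact LinearMap.congr_fun (congrArg ModuleCat.Hom.hom ht2) y
    have hle : s ≤ s' := by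
      refine ⟨hDQ, ?_⟩
      rintro ⟨y, hy⟩ ⟨z, hz⟩ hyz
      dsimp at hyz
      subst hyz
      exact (LinearMap.congr_fun (congrArg ModuleCat.Hom.hom ht1) ⟨y, hy⟩).symm
    exact hx ((hmax hs' hle).1 hxP)
  refine ⟨ModuleCat.ofHom (s.toFun ∘ₗ
    LinearMap.codRestrict s.domain LinearMap.id (fun x => by rw [htop]; trivial)), ?_⟩
  ext x
  exact hsf ⟨x, by rw [htop]; trivial⟩

end Generate

end ExactPaper

open ExactPaper CategoryTheory Limits in
/-- **Theorem 4.4(3)(i)**: let `ℰ` be an exact structure on `Mod R` with enough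
`ℰ`-projectives and `ℰ`-injectives containing all pure exact sequences. If `𝒴` is a class
of pure injective right `R`-modules closed under taking `ℰ`-cosyzygies, then
`(^⊥𝒴, (^⊥𝒴)^⊥)` is a complete hereditary `ℰ`-cotorsion pair. -/
theorem completeHereditaryCotorsionPair_of_pureInjective
    {R : Type u} [Ring R]
    (E : ExactStructure (ModuleCat.{u} Rᵐᵒᵖ))
    (hproj : E.EnoughProjectives) (hinj : E.EnoughInjectives)
    (hpure : ∀ S : ShortComplex (ModuleCat.{u} Rᵐᵒᵖ), PureSES S → E.conflation S)
    (𝒴 : Set (ModuleCat.{u} Rᵐᵒᵖ)) (h𝒴 : ∀ Y ∈ 𝒴, PureInjective Y)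
    (hcosyz : ∀ Y ∈ 𝒴, ∀ (I C : ModuleCat.{u} Rᵐᵒᵖ) (i : Y ⟶ I) (p : I ⟶ C)
      (w : i ≫ p = 0), E.conflation (ShortComplex.mk i p w) → E.EInjective I → C ∈ 𝒴) :
    E.CompleteHereditaryCotorsionPair (E.leftPerp 𝒴) (E.rightPerp (E.leftPerp 𝒴)) := by
  have hres := resolving_leftPerp E hinj 𝒴 hcosyz
  have hq := pureQuot_mem E hinj 𝒴 h𝒴
  have hmain := complete_of_small E hproj hinj (E.leftPerp 𝒴) (leftPerp_eq E 𝒴).symm.subset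
    (ι := {i : SmallIdx Rᵐᵒᵖ // i.toMod ∈ E.leftPerp 𝒴}) (fun i => i.1.toMod) (fun i => i.2) (by
      intro N hN
      refine generate E hpure hinj _ hq N (fun M hM P hP hi => ?_)
      obtain ⟨i, ⟨e⟩⟩ := hi
      have hex : Function.Exact P.subtype P.mkQ := LinearMap.exact_subtype_mkQ P
      have hse := pureSES_of P.subtype P.mkQ P.injective_subtype P.mkQ_surjective hex
        (by rw [Submodule.ker_mkQ]; exact hP) (ofHom_zero _ _ hex)
      have hPX : ModuleCat.of Rᵐᵒᵖ P ∈ E.leftPerp 𝒴 :=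
        hres.2.2 _ (hpure _ hse) hM (hq _ hse hM)
      have hiX : i.toMod ∈ E.leftPerp 𝒴 := fun Y hY => ext1Zero_of_iso E hinj e.symm (hPX Y hY)
      exact ext1Zero_of_iso E hinj e (hN ⟨i, hiX⟩))
  exact ⟨leftPerp_eq E 𝒴, rfl, hmain.1, hmain.2, hres⟩
end

section
/- Let R be an associative unital ring and let 𝒳 be a class of pure projective right R-modules. Then the class 𝒳^⊥₁ = {N : Ext¹_R(X,N) = 0 for all X ∈ 𝒳} is preenveloping: every right R-module admits an 𝒳^⊥₁-preenvelope. If moreover R is right coherent and every module in 𝒳 is finitely presented, then 𝒳^⊥₁ is also covering: every right R-module admits an 𝒳^⊥₁-cover. -/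
open CategoryTheory Category Limits

universe v u

namespace ExactPaper

open CategoryTheory Limits

variable {𝒜 : Type u} [Category.{v} 𝒜] [Abelian 𝒜]

/-- Classical `Ext¹_𝒜(M,N) = 0`: every short exact sequence `0 → N → Z → M → 0` splits. -/
def Ext1ZeroClassical (M N : 𝒜) : Prop :=
  ∀ (Z : 𝒜) (i : N ⟶ Z) (p : Z ⟶ M) (w : i ≫ p = 0),
    (ShortComplex.mk i p w).ShortExact → ∃ r : Z ⟶ N, i ≫ r = 𝟙 N

/-- The classical right orthogonal class `𝒳^⊥₁`. -/
def rightPerp1 (𝒳 : Set 𝒜) : Set 𝒜 := {N | ∀ X ∈ 𝒳, Ext1ZeroClassical X N}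

/-- The classical left orthogonal class `^⊥₁𝒴`. -/
def leftPerp1 (𝒴 : Set 𝒜) : Set 𝒜 := {M | ∀ Y ∈ 𝒴, Ext1ZeroClassical M Y}

/-- `(𝒳,𝒴)` is a complete hereditary classical cotorsion pair in `𝒜`. -/
def CompleteHereditaryClassicalCotorsionPair (𝒳 𝒴 : Set 𝒜) : Prop :=
  𝒳 = leftPerp1 𝒴 ∧ 𝒴 = rightPerp1 𝒳 ∧
  (∀ A : 𝒜, ∃ (Y X : 𝒜) (i : Y ⟶ X) (p : X ⟶ A) (w : i ≫ p = 0),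
      (ShortComplex.mk i p w).ShortExact ∧ X ∈ 𝒳 ∧ Y ∈ 𝒴) ∧
  (∀ A : 𝒜, ∃ (Y' X' : 𝒜) (i : A ⟶ Y') (p : Y' ⟶ X') (w : i ≫ p = 0),
      (ShortComplex.mk i p w).ShortExact ∧ X' ∈ 𝒳 ∧ Y' ∈ 𝒴) ∧
  (∀ (S : ShortComplex 𝒜), S.ShortExact → S.X₂ ∈ 𝒳 → S.X₃ ∈ 𝒳 → S.X₁ ∈ 𝒳)

end ExactPaper

namespace PerpCover

variable {S : Type u} [Ring S]

/-- Purity of a submodule, expressed through finite systems of linear equations. -/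
def IsPure {Y : Type u} [AddCommGroup Y] [Module S Y] (P : Submodule S Y) : Prop :=
  ∀ (m n : ℕ) (c : Fin m → Fin n → S) (y : Fin n → Y),
    (∀ j, ∑ i, c j i • y i ∈ P) →
    ∃ x : Fin n → Y, (∀ i, x i ∈ P) ∧ ∀ j, ∑ i, c j i • x i = ∑ i, c j i • y i

/-- Terms: formal closure under module operations and (Skolem) solutions. -/
inductive Tm (S G : Type u) : Type u
  | gen (g : G) : Tm S G
  | zero : Tm S G
  | add (a b : Tm S G) : Tm S G
  | smul (s : S) (a : Tm S G) : Tm S G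
  | sol (m n : ℕ) (c : Fin m → Fin n → S) (t : Fin m → Tm S G) (k : Fin m ⊕ Fin n) : Tm S G

/-- Evaluation of terms. -/
def Tm.eval {G Y : Type u} [AddCommGroup Y] [Module S Y] (g : G → Y)
    (σ : ∀ m n : ℕ, (Fin m → Fin n → S) → (Fin m → Y) → (Fin m ⊕ Fin n) → Y) : Tm S G → Y
  | .gen a => g a
  | .zero => 0
  | .add a b => Tm.eval g σ a + Tm.eval g σ b
  | .smul s a => s • Tm.eval g σ a
  | .sol m n c t k => σ m n c (fun j => Tm.eval g σ (t j)) k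

/-- Every map from `G` lands in a pure submodule which is a quotient of `Tm S G`. -/
theorem exists_small_pure {G Y : Type u} [AddCommGroup Y] [Module S Y] (g : G → Y) :
    ∃ (P : Submodule S Y) (e : Tm S G → P), Function.Surjective e ∧ IsPure P ∧ ∀ a, g a ∈ P := by
  classical
  let σ : ∀ m n : ℕ, (Fin m → Fin n → S) → (Fin m → Y) → (Fin m ⊕ Fin n) → Y :=
    fun m n c p k => if h : ∃ x : Fin n → Y, ∀ j, ∑ i, c j i • x i = p j then
      Sum.elim 0 h.choose k else 0
  let P : Submodule S Y :=
    { carrier := Set.range (Tm.eval g σ)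
      add_mem' := by
        rintro _ _ ⟨a, rfl⟩ ⟨b, rfl⟩
        exact ⟨.add a b, rfl⟩
      zero_mem' := ⟨.zero, rfl⟩
      smul_mem' := by
        rintro s _ ⟨a, rfl⟩
        exact ⟨.smul s a, rfl⟩ }
  refine ⟨P, fun t => ⟨Tm.eval g σ t, t, rfl⟩, ?_, ?_, fun a => ⟨.gen a, rfl⟩⟩
  · rintro ⟨_, t, rfl⟩
    exact ⟨t, rfl⟩
  · intro m n c y hy
    choose t ht using hy
    have h : ∃ x : Fin n → Y, ∀ j, ∑ i, c j i • x i = Tm.eval g σ (t j) :=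
      ⟨y, fun j => (ht j).symm⟩
    refine ⟨fun i => Tm.eval g σ (.sol m n c t (.inr i)), fun i => ⟨_, rfl⟩, fun j => ?_⟩
    have h2 : ∀ i, Tm.eval g σ (.sol m n c t (.inr i)) = h.choose i := by
      intro i
      simp only [Tm.eval, σ]
      rw [dif_pos h]
      rfl
    simp only [h2]
    rw [h.choose_spec j, ht j]

/-- W-type used to bound the size of reduced objects. -/
inductive Wt (K Q : Type u) : Type u
  | base : Wt K Q
  | node (q : Q) (n : K → Wt K Q) (k : K) : Wt K Q

/-- The type bounding reduced objects over `A`. -/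
abbrev Bd (S A : Type u) [Ring S] : Type u :=
  Wt (Tm S PUnit.{u+1}) (Submodule S ((Tm S PUnit.{u+1} ⊕ Tm S PUnit.{u+1}) →₀ S) ×
    (Tm S PUnit.{u+1} → A))

section bee
variable {Y A : Type u} [AddCommGroup Y] [Module S Y] [AddCommGroup A] [Module S A]

def Rel {K : Type u} (f : Y →ₗ[S] A) (q : Submodule S ((K ⊕ K) →₀ S) × (K → A)) (n x : K → Y) :
    Prop :=
  q.1 ≤ LinearMap.ker (Finsupp.linearCombination S (Sum.elim n x)) ∧ ∀ k, f (x k) = q.2 k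

open Classical in
noncomputable def Wt.eval {K : Type u} (f : Y →ₗ[S] A) :
    Wt K (Submodule S ((K ⊕ K) →₀ S) × (K → A)) → Y
  | .base => 0
  | .node q n k => if h : ∃ x, Rel f q (fun k => Wt.eval f (n k)) x then h.choose k else 0

/-- Main lemma. -/
theorem exists_pure_of_not_small (f : Y →ₗ[S] A) (y : Y)
    (hy : y ∉ Set.range (Wt.eval f : Bd S A → Y)) :
    ∃ D : Submodule S Y, D ≠ ⊥ ∧ IsPure D ∧ D ≤ LinearMap.ker f := by
  classical
  set N := Set.range (Wt.eval f : Bd S A → Y) with hN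
  let C : ∀ m n : ℕ, (Fin m → Fin n → S) → (Fin m → Y) → (Fin m ⊕ Fin n → Y) → Prop :=
    fun m n c p z => (∀ j, z (.inl j) ∈ N) ∧ ∀ j, p j = z (.inl j) + ∑ i, c j i • z (.inr i)
  let σ : ∀ m n : ℕ, (Fin m → Fin n → S) → (Fin m → Y) → (Fin m ⊕ Fin n) → Y :=
    fun m n c p k => if h : ∃ z, C m n c p z then h.choose k else 0
  let x : Tm S PUnit.{u+1} → Y := Tm.eval (fun _ => y) σ
  have h0 : (0 : Y) ∈ N := ⟨.base, rfl⟩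
  have hn : ∀ t, ∃ w : Bd S A, Wt.eval f w = if x t ∈ N then x t else 0 := by
    intro t
    split_ifs with h
    · exact h
    · exact h0
  choose n' hn' using hn
  let q : Submodule S ((Tm S PUnit.{u+1} ⊕ Tm S PUnit.{u+1}) →₀ S) × (Tm S PUnit.{u+1} → A) :=
    (LinearMap.ker (Finsupp.linearCombination S (Sum.elim (fun t => Wt.eval f (n' t)) x)),
      fun t => f (x t))
  have hR : ∃ x, Rel f q (fun k => Wt.eval f (n' k)) x := ⟨x, le_refl _, fun k => rfl⟩
  obtain ⟨x', hx'N, hx'⟩ : ∃ x' : Tm S PUnit.{u+1} → Y, (∀ t, x' t ∈ N) ∧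
      Rel f q (fun k => Wt.eval f (n' k)) x' := by
    refine ⟨fun t => Wt.eval f (.node q n' t : Bd S A), fun t => ⟨_, rfl⟩, ?_⟩
    have : (fun t => Wt.eval f (.node q n' t : Bd S A)) = hR.choose := by
      funext t
      rw [Wt.eval, dif_pos hR]
    rw [this]
    exact hR.choose_spec
  -- transfer of linear relations
  have key : ∀ v : (Tm S PUnit.{u+1} ⊕ Tm S PUnit.{u+1}) →₀ S,
      Finsupp.linearCombination S (Sum.elim (fun t => Wt.eval f (n' t)) x) v = 0 →
      Finsupp.linearCombination S (Sum.elim (fun t => Wt.eval f (n' t)) x') v = 0 :=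
    fun v hv => hx'.1 hv
  have hzero : x' .zero = 0 := by
    have := key (Finsupp.single (.inr .zero) 1) (by simp [x, Tm.eval])
    simpa using this
  have hadd : ∀ a b, x' (.add a b) = x' a + x' b := by
    intro a b
    have := key (Finsupp.single (.inr (.add a b)) 1 - Finsupp.single (.inr a) 1
      - Finsupp.single (.inr b) 1) (by simp [x, Tm.eval])
    simp only [map_sub, Finsupp.linearCombination_single, Sum.elim_inr, one_smul] at this
    rw [sub_sub, sub_eq_zero] at this
    exact this
  have hsmul : ∀ s a, x' (.smul s a) = s • x' a := by
    intro s a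
    have := key (Finsupp.single (.inr (.smul s a)) 1 - Finsupp.single (.inr a) s)
      (by simp [x, Tm.eval])
    simp only [map_sub, Finsupp.linearCombination_single, Sum.elim_inr, one_smul] at this
    exact sub_eq_zero.1 this
  have hfix : ∀ t, x t ∈ N → x' t = x t := by
    intro t ht
    have := key (Finsupp.single (.inr t) 1 - Finsupp.single (.inl t) 1)
      (by simp [hn', ht])
    simp only [map_sub, Finsupp.linearCombination_single, Sum.elim_inr, Sum.elim_inl, one_smul,
      hn', if_pos ht] at this
    exact sub_eq_zero.1 this
  let D : Submodule S Y :=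
    { carrier := Set.range (fun t => x t - x' t)
      add_mem' := by
        rintro _ _ ⟨a, rfl⟩ ⟨b, rfl⟩
        refine ⟨.add a b, ?_⟩
        simp only [hadd]
        simp only [x, Tm.eval]
        abel
      zero_mem' := ⟨.zero, by simp only [hzero]; simp [x, Tm.eval]⟩
      smul_mem' := by
        rintro s _ ⟨a, rfl⟩
        refine ⟨.smul s a, ?_⟩
        simp only [hsmul]
        simp only [x, Tm.eval, smul_sub] }
  refine ⟨D, ?_, ?_, ?_⟩
  · intro hD
    have h1 : x (.gen PUnit.unit) - x' (.gen PUnit.unit) ∈ D := ⟨_, rfl⟩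
    rw [hD, Submodule.mem_bot, sub_eq_zero] at h1
    apply hy
    have h2 : x (.gen PUnit.unit) = y := rfl
    rw [← h2, h1]
    exact hx'N _
  · intro m n c z hz
    choose t ht using hz
    simp only at ht
    have h : ∃ z, C m n c (fun j => x (t j)) z := by
      refine ⟨Sum.elim (fun j => x' (t j)) z, fun j => hx'N _, fun j => ?_⟩
      simp only [Sum.elim_inl, Sum.elim_inr]
      rw [← ht j]
      abel
    have hσ : ∀ k, x (.sol m n c t k) = h.choose k := by
      intro k
      change σ m n c (fun j => x (t j)) k = _
      simp only [σ]
      rw [dif_pos h]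
    obtain ⟨h1, h2⟩ := h.choose_spec
    simp only [← hσ] at h1 h2
    have h3 : ∀ j, x' (t j) = x' (.sol m n c t (.inl j)) +
        ∑ i, c j i • x' (.sol m n c t (.inr i)) := by
      intro j
      have := key (Finsupp.single (.inr (t j)) 1 - Finsupp.single (.inr (.sol m n c t (.inl j))) 1
        - ∑ i, Finsupp.single (.inr (.sol m n c t (.inr i))) (c j i))
        (by
          simp only [map_sub, map_sum, Finsupp.linearCombination_single, Sum.elim_inr, one_smul]
          rw [h2 j]
          abel)
      simp only [map_sub, map_sum, Finsupp.linearCombination_single, Sum.elim_inr, one_smul] at this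
      rw [sub_sub, sub_eq_zero] at this
      exact this
    refine ⟨fun i => x (.sol m n c t (.inr i)) - x' (.sol m n c t (.inr i)), fun i => ⟨_, rfl⟩,
      fun j => ?_⟩
    simp only [smul_sub, Finset.sum_sub_distrib]
    rw [← ht j, h3 j, h2 j, hfix _ (h1 j)]
    abel
  · rintro _ ⟨t, rfl⟩
    rw [LinearMap.mem_ker, map_sub, hx'.2 t]
    simp [q]

/-- An object over `A` is reduced if its kernel contains no nonzero pure submodule. -/
def Reduced (f : Y →ₗ[S] A) : Prop :=
  ∀ P : Submodule S Y, IsPure P → P ≤ LinearMap.ker f → P = ⊥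

theorem Reduced.small {f : Y →ₗ[S] A} (hf : Reduced f) :
    Function.Surjective (Wt.eval f : Bd S A → Y) := by
  intro y
  by_contra h
  obtain ⟨D, h1, h2, h3⟩ := exists_pure_of_not_small f y h
  exact h1 (hf D h2 h3)

theorem IsPure.bot : IsPure (⊥ : Submodule S Y) := by
  intro m n c y hy
  refine ⟨0, by simp, fun j => ?_⟩
  rw [(Submodule.mem_bot S).1 (hy j)]
  simp

theorem IsPure.comap {P : Submodule S Y} (hP : IsPure P) {D : Submodule S (Y ⧸ P)}
    (hD : IsPure D) : IsPure (D.comap P.mkQ) := by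
  intro m n c y hy
  obtain ⟨d, hd, hd'⟩ := hD m n c (fun i => P.mkQ (y i)) (by
    intro j
    have := hy j
    rw [Submodule.mem_comap, map_sum] at this
    simpa only [map_smul] using this)
  choose d₀ hd₀ using fun i => P.mkQ_surjective (d i)
  obtain ⟨p, hp, hp'⟩ := hP m n c (fun i => y i - d₀ i) (by
    intro j
    rw [← P.ker_mkQ, LinearMap.mem_ker]
    simp only [map_sum, map_smul, map_sub, hd₀, smul_sub, Finset.sum_sub_distrib, hd' j, sub_self])
  refine ⟨fun i => d₀ i + p i, fun i => ?_, fun j => ?_⟩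
  · rw [Submodule.mem_comap, map_add, hd₀]
    have : P.mkQ (p i) = 0 := by
      rw [← LinearMap.mem_ker, P.ker_mkQ]; exact hp i
    rw [this, add_zero]
    exact hd i
  · simp only [smul_add, Finset.sum_add_distrib, hp' j, smul_sub, Finset.sum_sub_distrib]
    abel

/-- Every object over `A` has a reduced pure quotient. -/
theorem exists_reduced (f : Y →ₗ[S] A) : ∃ (P : Submodule S Y) (hP : P ≤ LinearMap.ker f),
    IsPure P ∧ Reduced (P.liftQ f hP) := by
  obtain ⟨P, hP⟩ := zorn_le₀ {P : Submodule S Y | IsPure P ∧ P ≤ LinearMap.ker f} (by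
    intro ch hch hc
    rcases ch.eq_empty_or_nonempty with rfl | hne
    · exact ⟨⊥, ⟨IsPure.bot, bot_le⟩, by simp⟩
    refine ⟨sSup ch, ⟨?_, sSup_le fun P hP => (hch hP).2⟩, fun P hP => le_sSup hP⟩
    intro m n c y hy
    have hdir : DirectedOn (· ≤ ·) ch := hc.directedOn
    have h1 : ∀ j, ∃ P ∈ ch, ∑ i, c j i • y i ∈ P := fun j =>
      (Submodule.mem_sSup_of_directed hne hdir).1 (hy j)
    choose Pj hPj hmem using h1
    obtain ⟨P, hP, hle⟩ : ∃ P ∈ ch, ∀ j, Pj j ≤ P := by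
      haveI : Nonempty ch := hne.to_subtype
      obtain ⟨P, hP⟩ := (directedOn_iff_directed.1 hdir).finite_le (fun j => (⟨Pj j, hPj j⟩ : ch))
      exact ⟨P.1, P.2, fun j => hP j⟩
    obtain ⟨x, hx, hx'⟩ := (hch hP).1 m n c y (fun j => hle j (hmem j))
    exact ⟨x, fun i => (le_sSup hP : P ≤ _) (hx i), hx'⟩)
  refine ⟨P, hP.prop.2, hP.prop.1, ?_⟩
  intro D hD hDk
  have h1 : D.comap P.mkQ ≤ P := by
    apply hP.le_of_ge ⟨hP.prop.1.comap hD, ?_⟩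
    · intro p hp
      rw [Submodule.mem_comap, LinearMap.mem_ker.1 (by rw [P.ker_mkQ]; exact hp)]
      exact D.zero_mem
    · intro z hz
      have := hDk hz
      simpa using this
  rw [eq_bot_iff]
  intro d hd
  obtain ⟨z, rfl⟩ := P.mkQ_surjective d
  have : z ∈ P := h1 hd
  rw [Submodule.mem_bot, ← LinearMap.mem_ker, P.ker_mkQ]
  exact this

end bee
section ext
open ExactPaper

variable {S : Type u} [Ring S]

theorem exists_fin_surj (M : Type u) [AddCommGroup M] [Module S M]
    [Module.FinitePresentation S M] :
    ∃ (n m : ℕ) (p : (Fin n → S) →ₗ[S] M) (c : Fin m → Fin n → S), Function.Surjective p ∧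
      LinearMap.ker p = Submodule.span S (Set.range c) := by
  obtain ⟨n, K, e, hK⟩ := Module.FinitePresentation.exists_fin S M
  obtain ⟨m, c, hc⟩ := Submodule.fg_iff_exists_fin_generating_family.1 hK
  refine ⟨n, m, e.symm.toLinearMap ∘ₗ K.mkQ, c, ?_, ?_⟩
  · simpa using K.mkQ_surjective
  · rw [hc]
    ext v
    simp

theorem fin_map_apply {n : ℕ} {Y : Type u} [AddCommGroup Y] [Module S Y]
    (b : (Fin n → S) →ₗ[S] Y) (v : Fin n → S) : b v = ∑ i, v i • b (Pi.single i 1) := by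
  conv_lhs => rw [pi_eq_sum_univ' v]
  simp only [map_sum, map_smul]

/-- Finitely presented modules lift along pure quotients. -/
theorem IsPure.lift {Y M : Type u} [AddCommGroup Y] [Module S Y] [AddCommGroup M] [Module S M]
    [Module.FinitePresentation S M] {P : Submodule S Y} (hP : IsPure P)
    (h : M →ₗ[S] Y ⧸ P) : ∃ k : M →ₗ[S] Y, P.mkQ ∘ₗ k = h := by
  obtain ⟨n, m, p, c, hp, hker⟩ := exists_fin_surj (S := S) M
  choose y hy using fun i => P.mkQ_surjective (h (p (Pi.single i 1)))
  have hpc : ∀ j, p (c j) = 0 := fun j => by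
    rw [← LinearMap.mem_ker, hker]
    exact Submodule.subset_span ⟨j, rfl⟩
  obtain ⟨x, hx, hx'⟩ := hP m n c y (by
    intro j
    rw [← P.ker_mkQ, LinearMap.mem_ker]
    simp only [map_sum, map_smul, hy]
    have := fin_map_apply (h ∘ₗ p) (c j)
    simp only [LinearMap.comp_apply, hpc, map_zero] at this
    exact this.symm)
  let k₀ : (Fin n → S) →ₗ[S] Y := Fintype.linearCombination S (fun i => y i - x i)
  have hk₀ : ∀ v, k₀ v = ∑ i, v i • (y i - x i) := fun v => Fintype.linearCombination_apply _ _ _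
  have hle : LinearMap.ker p ≤ LinearMap.ker k₀ := by
    rw [hker, Submodule.span_le]
    rintro _ ⟨j, rfl⟩
    simp only [SetLike.mem_coe, LinearMap.mem_ker, hk₀, smul_sub, Finset.sum_sub_distrib, hx',
      sub_self]
  let e := p.quotKerEquivOfSurjective hp
  refine ⟨(LinearMap.ker p).liftQ k₀ hle ∘ₗ e.symm.toLinearMap, ?_⟩
  apply LinearMap.ext
  intro z
  obtain ⟨v, rfl⟩ := hp z
  have he : e.symm (p v) = (LinearMap.ker p).mkQ v := by
    rw [LinearEquiv.symm_apply_eq]; rfl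
  simp only [LinearMap.comp_apply, LinearEquiv.coe_coe, he, Submodule.mkQ_apply,
    Submodule.liftQ_apply]
  rw [← Submodule.mkQ_apply, hk₀]
  have := fin_map_apply (h ∘ₗ p) v
  simp only [LinearMap.comp_apply] at this
  rw [this]
  simp only [map_sum, map_smul, map_sub, hy]
  congr 1 with i
  have : P.mkQ (x i) = 0 := by
    rw [← LinearMap.mem_ker, P.ker_mkQ]; exact hx i
  rw [this, sub_zero]

theorem shortExact_of {N Z X : Type u} [AddCommGroup N] [Module S N] [AddCommGroup Z] [Module S Z]
    [AddCommGroup X] [Module S X] (i : N →ₗ[S] Z) (p : Z →ₗ[S] X)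
    (w : ModuleCat.ofHom i ≫ ModuleCat.ofHom p = 0)
    (hi : Function.Injective i) (hp : Function.Surjective p)
    (hex : ∀ z, p z = 0 → ∃ n, i n = z) :
    (ShortComplex.mk (ModuleCat.ofHom i) (ModuleCat.ofHom p) w).ShortExact := by
  refine @ShortComplex.ShortExact.mk _ _ _ _ ?_ ?_ ?_
  · rw [ShortComplex.moduleCat_exact_iff]
    intro z hz
    exact hex z hz
  · exact (ModuleCat.mono_iff_injective _).2 hi
  · exact (ModuleCat.epi_iff_surjective _).2 hp

theorem ext_iff (X N : ModuleCat.{u} S) {F : Type u} [AddCommGroup F] [Module S F]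
    [Module.Projective S F] (p : F →ₗ[S] X) (hp : Function.Surjective p) :
    Ext1ZeroClassical X N ↔ ∀ h : LinearMap.ker p →ₗ[S] N, ∃ e : F →ₗ[S] N, ∀ g, e g.1 = h g := by
  constructor
  · intro H h
    let K : Submodule S (N × F) := LinearMap.range (h.prod (-(LinearMap.ker p).subtype))
    let i : N →ₗ[S] (N × F) ⧸ K := K.mkQ ∘ₗ LinearMap.inl S N F
    let p' : (N × F) ⧸ K →ₗ[S] X := K.liftQ (p ∘ₗ LinearMap.snd S N F) (by
      rintro _ ⟨g, rfl⟩
      simp)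
    have hmk : ∀ g : LinearMap.ker p, K.mkQ (h g, 0) = K.mkQ (0, g.1) := by
      intro g
      rw [← sub_eq_zero, ← map_sub, ← LinearMap.mem_ker, K.ker_mkQ]
      exact ⟨g, by simp⟩
    have w : ModuleCat.ofHom i ≫ ModuleCat.ofHom p' = 0 := by
      ext n
      simp [i, p']
    obtain ⟨r, hr⟩ := H (ModuleCat.of S ((N × F) ⧸ K)) (ModuleCat.ofHom i) (ModuleCat.ofHom p') w
      (shortExact_of i p' w (by
        rw [← LinearMap.ker_eq_bot, LinearMap.ker_eq_bot']
        intro n hn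
        have : ((n, 0) : N × F) ∈ K := by
          rw [← K.ker_mkQ]; exact hn
        obtain ⟨g, hg⟩ := this
        have hg1 : h g = n := congrArg Prod.fst hg
        have hg2 : -(g.1) = 0 := congrArg Prod.snd hg
        have hg0 : g = 0 := Subtype.ext (neg_eq_zero.1 hg2)
        rw [← hg1, hg0, map_zero]) (by
        intro z
        obtain ⟨v, rfl⟩ := hp z
        exact ⟨K.mkQ (0, v), by simp [p']⟩) (by
        intro z hz
        obtain ⟨⟨n, v⟩, rfl⟩ := K.mkQ_surjective z
        have hv : v ∈ LinearMap.ker p := by simpa [p'] using hz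
        refine ⟨n + h ⟨v, hv⟩, ?_⟩
        have := hmk ⟨v, hv⟩
        simp only [i, LinearMap.comp_apply, LinearMap.inl_apply]
        have e1 : ((n + h ⟨v, hv⟩, 0) : N × F) = (n, 0) + (h ⟨v, hv⟩, 0) := by simp
        have e2 : ((n, v) : N × F) = (n, 0) + (0, v) := by simp
        rw [e1, e2, map_add, map_add, this]))
    have hr' : ∀ n, r.hom (i n) = n := fun n => congrArg (fun φ => φ.hom n) hr
    refine ⟨r.hom ∘ₗ K.mkQ ∘ₗ LinearMap.inr S N F, fun g => ?_⟩
    change r.hom (K.mkQ (0, g.1)) = h g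
    rw [← hmk]
    exact hr' (h g)
  · intro H Z i q w hS
    have hinj : Function.Injective i.hom := (ModuleCat.mono_iff_injective _).1 hS.mono_f
    have hsur : Function.Surjective q.hom := (ModuleCat.epi_iff_surjective _).1 hS.epi_g
    have hex : ∀ z : Z, q.hom z = 0 → ∃ n, i.hom n = z :=
      (ShortComplex.moduleCat_exact_iff _).1 hS.exact
    have hw : ∀ n, q.hom (i.hom n) = 0 := fun n => congrArg (fun φ => φ.hom n) w
    obtain ⟨l, hl⟩ := Module.projective_lifting_property q.hom p hsur
    have hl' : ∀ v, q.hom (l v) = p v := fun v => LinearMap.congr_fun hl v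
    let ei := LinearEquiv.ofInjective i.hom hinj
    let l' : LinearMap.ker p →ₗ[S] LinearMap.range i.hom :=
      LinearMap.codRestrict _ (l ∘ₗ (LinearMap.ker p).subtype) (by
        intro g
        exact hex _ (by simp [hl']))
    obtain ⟨e, he⟩ := H (ei.symm.toLinearMap ∘ₗ l')
    have he' : ∀ v, p v = 0 → i.hom (e v) = l v := by
      intro v hv
      have h1 := he ⟨v, hv⟩
      simp only at h1
      rw [h1]
      have h2 : ei (ei.symm (l' ⟨v, hv⟩)) = l' ⟨v, hv⟩ := ei.apply_symm_apply _
      exact congrArg Subtype.val h2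
    -- section
    let s₀ : F →ₗ[S] Z := l - i.hom ∘ₗ e
    have hs₀ : LinearMap.ker p ≤ LinearMap.ker s₀ := by
      intro v hv
      simp [s₀, he' v hv]
    let eq := p.quotKerEquivOfSurjective hp
    let s : X →ₗ[S] Z := (LinearMap.ker p).liftQ s₀ hs₀ ∘ₗ eq.symm.toLinearMap
    have hs : ∀ v, s (p v) = s₀ v := by
      intro v
      have : eq.symm (p v) = (LinearMap.ker p).mkQ v := by
        rw [LinearEquiv.symm_apply_eq]; rfl
      simp only [s, LinearMap.comp_apply, LinearEquiv.coe_coe, this, Submodule.mkQ_apply,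
        Submodule.liftQ_apply]
    have hqs : ∀ z, q.hom (s z) = z := by
      intro z
      obtain ⟨v, rfl⟩ := hp z
      rw [hs]
      simp [s₀, hl', hw]
    let r₀ : Z →ₗ[S] LinearMap.range i.hom :=
      LinearMap.codRestrict _ (LinearMap.id - s ∘ₗ q.hom) (by
        intro z
        apply hex
        simp [hqs])
    refine ⟨ModuleCat.ofHom (ei.symm.toLinearMap ∘ₗ r₀), ?_⟩
    ext n
    change ei.symm (r₀ (i.hom n)) = n
    rw [LinearEquiv.symm_apply_eq]
    apply Subtype.ext
    change i.hom n - s (q.hom (i.hom n)) = i.hom n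
    rw [hw, map_zero, sub_zero]

/-- The orthogonality condition in terms of unbundled modules. -/
theorem perp_iff (𝒳 : Set (ModuleCat.{u} S)) (N : ModuleCat.{u} S) : N ∈ rightPerp1 𝒳 ↔
    ∀ X ∈ 𝒳, ∀ h : LinearMap.ker (Finsupp.linearCombination S (id : X → X)) →ₗ[S] N,
      ∃ e : (X →₀ S) →ₗ[S] N, ∀ g, e g.1 = h g :=
  forall₂_congr fun X _ => ext_iff X N _ (Finsupp.linearCombination_id_surjective S X)

theorem perp_of_equiv (𝒳 : Set (ModuleCat.{u} S)) {M N : ModuleCat.{u} S}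
    (e : M ≃ₗ[S] N) (hM : M ∈ rightPerp1 𝒳) : N ∈ rightPerp1 𝒳 := by
  rw [perp_iff] at *
  intro X hX h
  obtain ⟨k, hk⟩ := hM X hX (e.symm.toLinearMap ∘ₗ h)
  exact ⟨e.toLinearMap ∘ₗ k, fun g => by simp [hk]⟩

theorem perp_pi (𝒳 : Set (ModuleCat.{u} S)) {ι : Type u} (M : ι → Type u)
    [∀ i, AddCommGroup (M i)] [∀ i, Module S (M i)]
    (hM : ∀ i, ModuleCat.of S (M i) ∈ rightPerp1 𝒳) :
    ModuleCat.of S (∀ i, M i) ∈ rightPerp1 𝒳 := by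
  simp only [perp_iff] at *
  intro X hX h
  choose k hk using fun i => hM i X hX (LinearMap.proj i ∘ₗ h)
  exact ⟨LinearMap.pi k, fun g => by ext i; simp [hk]⟩

theorem exists_pi (𝒳 : Set (ModuleCat.{u} S)) {ι : Type u} (Q : ι → ModuleCat.{u} S)
    (hQ : ∀ i, Q i ∈ rightPerp1 𝒳) (A : ModuleCat.{u} S) (φ : ∀ i, A →ₗ[S] Q i) :
    ∃ (Y : ModuleCat.{u} S) (j : A ⟶ Y) (pr : ∀ i, Y →ₗ[S] Q i), Y ∈ rightPerp1 𝒳 ∧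
      ∀ i a, pr i (j.hom a) = φ i a :=
  ⟨ModuleCat.of S (∀ i, Q i), ModuleCat.ofHom (LinearMap.pi φ), fun i => LinearMap.proj i,
    perp_pi 𝒳 (fun i => Q i) hQ, fun _ _ => rfl⟩

theorem perp_prod (𝒳 : Set (ModuleCat.{u} S)) (M N : Type u)
    [AddCommGroup M] [Module S M] [AddCommGroup N] [Module S N]
    (hM : ModuleCat.of S M ∈ rightPerp1 𝒳) (hN : ModuleCat.of S N ∈ rightPerp1 𝒳) :
    ModuleCat.of S (M × N) ∈ rightPerp1 𝒳 := by
  simp only [perp_iff] at *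
  intro X hX h
  obtain ⟨k, hk⟩ := hM X hX (LinearMap.fst S M N ∘ₗ h)
  obtain ⟨k', hk'⟩ := hN X hX (LinearMap.snd S M N ∘ₗ h)
  exact ⟨k.prod k', fun g => by ext <;> simp [hk, hk']⟩

theorem perp_zero (𝒳 : Set (ModuleCat.{u} S)) :
    ModuleCat.of S PUnit.{u+1} ∈ rightPerp1 𝒳 := by
  rw [perp_iff]
  intro X hX h
  exact ⟨0, fun g => rfl⟩

theorem perp_pureSub {R : Type u} [Ring R] (𝒳 : Set (ModuleCat.{u} Rᵐᵒᵖ))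
    (h𝒳 : ∀ X ∈ 𝒳, PureProjective X) {Y : Type u} [AddCommGroup Y] [Module Rᵐᵒᵖ Y]
    (hY : ModuleCat.of Rᵐᵒᵖ Y ∈ rightPerp1 𝒳) (P : Submodule Rᵐᵒᵖ Y) (hP : IsPure P) :
    ModuleCat.of Rᵐᵒᵖ P ∈ rightPerp1 𝒳 := by
  intro X hX
  let p := Finsupp.linearCombination Rᵐᵒᵖ (id : X → X)
  have hp : Function.Surjective p := Finsupp.linearCombination_id_surjective _ X
  refine (ext_iff X _ p hp).2 fun h => ?_
  obtain ⟨k, hk⟩ := (ext_iff X _ p hp).1 (hY X hX) (P.subtype ∘ₗ h)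
  have hle : LinearMap.ker p ≤ LinearMap.ker (P.mkQ ∘ₗ k) := by
    intro v hv
    have := hk ⟨v, hv⟩
    simp only at this
    simp [this]
  let eq := p.quotKerEquivOfSurjective hp
  let b : X →ₗ[Rᵐᵒᵖ] Y ⧸ P := (LinearMap.ker p).liftQ (P.mkQ ∘ₗ k) hle ∘ₗ eq.symm.toLinearMap
  have hb : ∀ v, b (p v) = P.mkQ (k v) := by
    intro v
    have : eq.symm (p v) = (LinearMap.ker p).mkQ v := by
      rw [LinearEquiv.symm_apply_eq]; rfl
    simp only [b, LinearMap.comp_apply, LinearEquiv.coe_coe, this, Submodule.mkQ_apply,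
      Submodule.liftQ_apply]
  have w : ModuleCat.ofHom P.subtype ≫ ModuleCat.ofHom P.mkQ = 0 := by
    ext n
    simp
  obtain ⟨l, hl⟩ := h𝒳 X hX (ShortComplex.mk (ModuleCat.ofHom P.subtype) (ModuleCat.ofHom P.mkQ) w)
    ⟨shortExact_of _ _ w P.subtype_injective P.mkQ_surjective (fun z hz =>
      ⟨⟨z, by rw [← P.ker_mkQ]; exact hz⟩, rfl⟩), by
      intro F hF h
      obtain ⟨k, hk⟩ := hP.lift (M := F) h.hom
      exact ⟨ModuleCat.ofHom k, ModuleCat.hom_ext hk⟩⟩ (ModuleCat.ofHom b)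
  have hl' : ∀ z, P.mkQ (l.hom z) = b z := fun z => congrArg (fun φ => φ.hom z) hl
  refine ⟨LinearMap.codRestrict P (k - l.hom ∘ₗ p) ?_, ?_⟩
  · intro v
    refine (Submodule.Quotient.mk_eq_zero P).1 ?_
    change P.mkQ (k v - l.hom (p v)) = 0
    rw [map_sub, ← hb, sub_eq_zero]
    exact (hl' (p v)).symm
  · intro g
    apply Subtype.ext
    have h1 : p g.1 = 0 := g.2
    simp [hk, h1]

/-- First part of the theorem. -/
theorem preenveloping {R : Type u} [Ring R] (𝒳 : Set (ModuleCat.{u} Rᵐᵒᵖ))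
    (h𝒳 : ∀ X ∈ 𝒳, PureProjective X) (A : ModuleCat.{u} Rᵐᵒᵖ) :
    ∃ (Y : ModuleCat.{u} Rᵐᵒᵖ) (j : A ⟶ Y), IsPreenvelope (rightPerp1 𝒳) j := by
  let ι := {i : (K : Submodule Rᵐᵒᵖ (Tm Rᵐᵒᵖ A →₀ Rᵐᵒᵖ)) × (A →ₗ[Rᵐᵒᵖ] (Tm Rᵐᵒᵖ A →₀ Rᵐᵒᵖ) ⧸ K) //
    ModuleCat.of Rᵐᵒᵖ ((Tm Rᵐᵒᵖ A →₀ Rᵐᵒᵖ) ⧸ i.1) ∈ rightPerp1 𝒳}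
  let Q : ι → ModuleCat.{u} Rᵐᵒᵖ := fun i => ModuleCat.of Rᵐᵒᵖ ((Tm Rᵐᵒᵖ A →₀ Rᵐᵒᵖ) ⧸ i.1.1)
  let φ : ∀ i, A →ₗ[Rᵐᵒᵖ] Q i := fun i => i.1.2
  obtain ⟨Y, j, pr, hY, hpr⟩ := exists_pi 𝒳 Q (fun i => i.2) A φ
  refine ⟨Y, j, hY, ?_⟩
  intro Y' hY' g
  obtain ⟨P, e, he, hP, hgP⟩ := exists_small_pure (S := Rᵐᵒᵖ) (G := A) g.hom
  let p : (Tm Rᵐᵒᵖ A →₀ Rᵐᵒᵖ) →ₗ[Rᵐᵒᵖ] P := Finsupp.linearCombination Rᵐᵒᵖ e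
  have hp : Function.Surjective p := Finsupp.linearCombination_surjective _ he
  let eq := p.quotKerEquivOfSurjective hp
  have hPm := perp_pureSub 𝒳 h𝒳 (Y := Y') hY' P hP
  let i : ι := ⟨⟨LinearMap.ker p, eq.symm.toLinearMap ∘ₗ LinearMap.codRestrict P g.hom hgP⟩,
    perp_of_equiv 𝒳 (M := ModuleCat.of _ P) eq.symm hPm⟩
  let pr' : Y →ₗ[Rᵐᵒᵖ] (Tm Rᵐᵒᵖ A →₀ Rᵐᵒᵖ) ⧸ LinearMap.ker p := pr i
  refine ⟨ModuleCat.ofHom (P.subtype ∘ₗ eq.toLinearMap ∘ₗ pr'), ?_⟩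
  ext a
  change (eq (pr i (j.hom a))).1 = _
  rw [hpr]
  change (eq (eq.symm (LinearMap.codRestrict P g.hom hgP a))).1 = _
  rw [eq.apply_symm_apply]
  rfl

/-! ### Coherence -/

theorem fp_of_fg_pi {M : Type u} [AddCommGroup M] [Module S M]
    (hM : ∀ I : Submodule S M, I.FG → Module.FinitePresentation S I) (n : ℕ) :
    ∀ N : Submodule S (Fin n → M), N.FG → Module.FinitePresentation S N := by
  induction n with
  | zero =>
    intro N hN
    exact Module.finitePresentation_of_projective S N
  | succ n ih =>
    intro N hN
    have : Module.Finite S N := Module.Finite.iff_fg.2 hN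
    let φ : N →ₗ[S] M := LinearMap.proj 0 ∘ₗ N.subtype
    have : Module.FinitePresentation S (LinearMap.range φ) := hM _ (by
      have h := (Module.Finite.fg_top (R := S) (M := N)).map φ
      rwa [Submodule.map_top] at h)
    have hφ := φ.surjective_rangeRestrict
    have hk := Module.FinitePresentation.fg_ker φ.rangeRestrict hφ
    let τ : LinearMap.ker φ.rangeRestrict →ₗ[S] (Fin n → M) :=
      LinearMap.funLeft S M Fin.succ ∘ₗ N.subtype ∘ₗ (LinearMap.ker φ.rangeRestrict).subtype
    have hτ : Function.Injective τ := by
      rintro ⟨⟨v, hv⟩, hv0⟩ ⟨⟨w, hw⟩, hw0⟩ h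
      apply Subtype.ext
      apply Subtype.ext
      funext i
      refine Fin.cases ?_ (fun i => ?_) i
      · have h1 := congrArg Subtype.val (LinearMap.mem_ker.1 hv0)
        have h2 := congrArg Subtype.val (LinearMap.mem_ker.1 hw0)
        exact h1.trans h2.symm
      · exact congrFun h i
    have : Module.Finite S (LinearMap.ker φ.rangeRestrict) := Module.Finite.iff_fg.2 hk
    have : Module.FinitePresentation S (LinearMap.range τ) := ih _ (by
      have h := (Module.Finite.fg_top (R := S) (M := LinearMap.ker φ.rangeRestrict)).map τ
      rwa [Submodule.map_top] at h)
    have : Module.FinitePresentation S (LinearMap.ker φ.rangeRestrict) :=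
      @Module.FinitePresentation.of_equiv S (LinearMap.range τ) (LinearMap.ker φ.rangeRestrict)
        _ _ _ _ _ (LinearEquiv.ofInjective τ hτ).symm this
    exact Module.finitePresentation_of_ker φ.rangeRestrict hφ

/-- The condition of `S` being coherent, for submodules of finite free modules. -/
def Coh (S : Type u) [Ring S] : Prop :=
  ∀ (n : ℕ) (N : Submodule S (Fin n → S)), N.FG → Module.FinitePresentation S N

theorem coh_of {R : Type u} [Ring R]
    (h : ∀ I : Submodule Rᵐᵒᵖ R, I.FG → Module.FinitePresentation Rᵐᵒᵖ I) : Coh Rᵐᵒᵖ := by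
  have h' : ∀ I : Submodule Rᵐᵒᵖ Rᵐᵒᵖ, I.FG → Module.FinitePresentation Rᵐᵒᵖ I := by
    intro I hI
    let e : Rᵐᵒᵖ ≃ₗ[Rᵐᵒᵖ] R :=
      { toFun := MulOpposite.unop
        invFun := MulOpposite.op
        left_inv := fun _ => rfl
        right_inv := fun _ => rfl
        map_add' := fun _ _ => rfl
        map_smul' := fun _ _ => rfl }
    have := h (I.map e.toLinearMap) (hI.map _)
    exact Module.FinitePresentation.of_equiv (e.submoduleMap I).symm
  exact fun n N hN => fp_of_fg_pi h' n N hN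

theorem perp_pureQuot (hS : Coh S) (𝒳 : Set (ModuleCat.{u} S))
    (h𝒳 : ∀ X ∈ 𝒳, Module.FinitePresentation S X) {Y : Type u} [AddCommGroup Y] [Module S Y]
    (hY : ModuleCat.of S Y ∈ rightPerp1 𝒳) (P : Submodule S Y) (hP : IsPure P) :
    ModuleCat.of S (Y ⧸ P) ∈ rightPerp1 𝒳 := by
  intro X hX
  have := h𝒳 X hX
  obtain ⟨n, m, p, c, hp, hker⟩ := exists_fin_surj (S := S) X
  have := hS n (LinearMap.ker p) (hker ▸ Submodule.fg_span (Set.finite_range c))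
  rw [ext_iff X _ p hp]
  intro h
  obtain ⟨k, hk⟩ := hP.lift (M := LinearMap.ker p) h
  obtain ⟨e, he⟩ := (ext_iff X _ p hp).1 (hY X hX) k
  refine ⟨P.mkQ ∘ₗ e, fun g => ?_⟩
  rw [← hk]
  simp [he]

/-- Maps from finitely presented modules into directed colimits factor through some stage. -/
theorem fp_factors {J : Type u} [LinearOrder J] [Nonempty J] (G : J ⥤ ModuleCat.{u} S)
    (c : Cocone G) (hc : IsColimit c) (M : Type u) [AddCommGroup M] [Module S M]
    [Module.FinitePresentation S M] (h : M →ₗ[S] c.pt) :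
    ∃ (j : J) (k : M →ₗ[S] G.obj j), (c.ι.app j).hom ∘ₗ k = h := by
  obtain ⟨n, m, p, r, hp, hker⟩ := exists_fin_surj (S := S) M
  have h1 : ∀ i, ∃ (j : J) (y : G.obj j), (c.ι.app j).hom y = h (p (Pi.single i 1)) := fun i =>
    Concrete.isColimit_exists_rep G hc (h (p (Pi.single i 1)))
  choose j y hy using h1
  obtain ⟨j₀, hj₀⟩ := Finite.exists_le j
  have hnat : ∀ {a b : J} (f : a ⟶ b) (z : G.obj a),
      (c.ι.app b).hom ((G.map f).hom z) = (c.ι.app a).hom z := fun f z =>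
    congrArg (fun φ => φ.hom z) (c.w f)
  let y' : Fin n → G.obj j₀ := fun i => (G.map (homOfLE (hj₀ i))).hom (y i)
  have hy' : ∀ i, (c.ι.app j₀).hom (y' i) = h (p (Pi.single i 1)) := fun i => by
    simp only [y', hnat, hy]
  have hpr : ∀ t, p (r t) = 0 := fun j => by
    rw [← LinearMap.mem_ker, hker]
    exact Submodule.subset_span ⟨j, rfl⟩
  have h2 : ∀ t, ∃ (l : J) (f : j₀ ⟶ l), (G.map f).hom (∑ i, r t i • y' i) = 0 := by
    intro t
    have h3 : (c.ι.app j₀).hom (∑ i, r t i • y' i) = (c.ι.app j₀).hom 0 := by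
      rw [map_zero]
      simp only [map_sum, map_smul, hy']
      have := fin_map_apply (h ∘ₗ p) (r t)
      simp only [LinearMap.comp_apply, hpr, map_zero] at this
      exact this.symm
    obtain ⟨l, f, g, hfg⟩ := Concrete.isColimit_exists_of_rep_eq.{u} G hc
      (∑ i, r t i • y' i) (0 : G.obj j₀) h3
    refine ⟨l, f, ?_⟩
    have h4 : (G.map f).hom (∑ i, r t i • y' i) = (G.map g).hom 0 := hfg
    rw [h4, map_zero]
  choose l f hf using h2
  obtain ⟨l₀', hl₀'⟩ := Finite.exists_le l
  let l₀ := max j₀ l₀'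
  have hl₀ : ∀ t, l t ≤ l₀ := fun t => (hl₀' t).trans (le_max_right _ _)
  have h0 : j₀ ≤ l₀ := le_max_left _ _
  let y'' : Fin n → G.obj l₀ := fun i => (G.map (homOfLE h0)).hom (y' i)
  let k₀ : (Fin n → S) →ₗ[S] G.obj l₀ := Fintype.linearCombination S y''
  have hk₀ : ∀ v, k₀ v = ∑ i, v i • y'' i := fun v => Fintype.linearCombination_apply _ _ _
  have hle : LinearMap.ker p ≤ LinearMap.ker k₀ := by
    rw [hker, Submodule.span_le]
    rintro _ ⟨t, rfl⟩
    simp only [SetLike.mem_coe, LinearMap.mem_ker, hk₀]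
    have h5 : G.map (homOfLE h0) = G.map (f t) ≫ G.map (homOfLE (hl₀ t)) := by
      rw [← G.map_comp]; rfl
    have h6 : (G.map (homOfLE h0)).hom (∑ i, r t i • y' i) = 0 := by
      rw [h5, ModuleCat.hom_comp, LinearMap.comp_apply, hf t, map_zero]
    simpa only [map_sum, map_smul] using h6
  let e := p.quotKerEquivOfSurjective hp
  refine ⟨l₀, (LinearMap.ker p).liftQ k₀ hle ∘ₗ e.symm.toLinearMap, ?_⟩
  apply LinearMap.ext
  intro z
  obtain ⟨v, rfl⟩ := hp z
  have he : e.symm (p v) = (LinearMap.ker p).mkQ v := by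
    rw [LinearEquiv.symm_apply_eq]; rfl
  simp only [LinearMap.comp_apply, LinearEquiv.coe_coe, he, Submodule.mkQ_apply,
    Submodule.liftQ_apply]
  have := fin_map_apply (h ∘ₗ p) v
  simp only [LinearMap.comp_apply] at this
  rw [this, hk₀]
  simp only [map_sum, map_smul, y'', hnat, hy']

theorem perp_colim (hS : Coh S) (𝒳 : Set (ModuleCat.{u} S))
    (h𝒳 : ∀ X ∈ 𝒳, Module.FinitePresentation S X)
    {J : Type u} [LinearOrder J] [Nonempty J] (G : J ⥤ ModuleCat.{u} S)
    (c : Cocone G) (hc : IsColimit c) (hG : ∀ j, G.obj j ∈ rightPerp1 𝒳) :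
    c.pt ∈ rightPerp1 𝒳 := by
  intro X hX
  have := h𝒳 X hX
  obtain ⟨n, m, p, r, hp, hker⟩ := exists_fin_surj (S := S) X
  have := hS n (LinearMap.ker p) (hker ▸ Submodule.fg_span (Set.finite_range r))
  rw [ext_iff X _ p hp]
  intro h
  obtain ⟨j, k, hk⟩ := fp_factors G c hc (LinearMap.ker p) h
  obtain ⟨e, he⟩ := (ext_iff X _ p hp).1 (hG j X hX) k
  refine ⟨(c.ι.app j).hom ∘ₗ e, fun g => ?_⟩
  rw [← hk]
  simp [he]

end ext
section maxobj

/-- Every map out of `Z` is injective. -/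
def Star {S : Type u} [Ring S] {C : Type (u+1)} [Category.{u} C] (U : C ⥤ ModuleCat.{u} S)
    (Z : C) : Prop :=
  ∀ (Z' : C) (f : Z ⟶ Z'), Function.Injective (U.map f).hom

/-- `Z` is a star object and every map to a star object is bijective. -/
def IsMaxObj {S : Type u} [Ring S] {C : Type (u+1)} [Category.{u} C] (U : C ⥤ ModuleCat.{u} S)
    (Z : C) : Prop :=
  Star U Z ∧ ∀ (Z' : C) (f : Z ⟶ Z'), Star U Z' → Function.Bijective (U.map f).hom

theorem exists_bound (κ : Cardinal.{u}) (hκ : κ.IsRegular) {K : Type u} (s : K → κ.ord.ToType)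
    (h : Cardinal.mk K < κ) : ∃ j, ∀ k, s k ≤ j := by
  have : Fact κ.IsRegular := ⟨hκ⟩
  have h' : HasCardinalLT K κ := (hasCardinalLT_iff_cardinal_mk_lt K κ).2 h
  exact ⟨IsCardinalFiltered.max s h', fun k => leOfHom (IsCardinalFiltered.toMax s h' k)⟩

open Cardinal in
theorem exists_max_stage {S : Type u} [Ring S] {C : Type (u+1)} [Category.{u} C]
    (U : C ⥤ ModuleCat.{u} S)
    (hpres : ∀ (J : Type u) [LinearOrder J] [Nonempty J], PreservesColimitsOfShape J U)
    (κ₀ : Cardinal.{u}) (hκ₀ : ℵ₀ ≤ κ₀)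
    (hsmall : ∀ Z : C, ∃ (Z' : C) (_ : Z ⟶ Z'), #(U.obj Z') ≤ κ₀)
    {J : Type u} [LinearOrder J] [Nonempty J] [SuccOrder J] [WellFoundedLT J] [NoMaxOrder J]
    (hJ : ∀ (K : Type u) (s : K → J), #K ≤ κ₀ → ∃ j, ∀ k, s k ≤ j)
    (F : J ⥤ C) (hF : F.IsWellOrderContinuous) (c : Cocone F) (hc : IsColimit c)
    (hsucc : ∀ j, #(U.obj (F.obj (Order.succ j))) ≤ κ₀ ∧
      (¬ Star U (F.obj j) →
        ¬ Function.Injective (U.map (F.map (homOfLE (Order.le_succ j)))).hom) ∧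
      (Star U (F.obj j) → ¬ IsMaxObj U (F.obj j) → Star U (F.obj (Order.succ j)) ∧
        ¬ Function.Bijective (U.map (F.map (homOfLE (Order.le_succ j)))).hom)) :
    ∃ j, IsMaxObj U (F.obj j) := by
  -- transition maps
  let t : ∀ {i j : J}, i ≤ j → U.obj (F.obj i) → U.obj (F.obj j) :=
    fun h => (U.map (F.map (homOfLE h))).hom
  let q : ∀ j : J, U.obj (F.obj j) → U.obj c.pt := fun j => (U.map (c.ι.app j)).hom
  have htt : ∀ {i j k : J} (h : i ≤ j) (h' : j ≤ k) (x), t h' (t h x) = t (h.trans h') x := by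
    intro i j k h h' x
    have : F.map (homOfLE (h.trans h')) = F.map (homOfLE h) ≫ F.map (homOfLE h') := by
      rw [← F.map_comp]; rfl
    simp only [t, this, Functor.map_comp, ModuleCat.hom_comp, LinearMap.comp_apply]
  have hqt : ∀ {i j : J} (h : i ≤ j) (x), q j (t h x) = q i x := by
    intro i j h x
    have : c.ι.app i = F.map (homOfLE h) ≫ c.ι.app j := (c.w _).symm
    simp only [t, q, this, Functor.map_comp, ModuleCat.hom_comp, LinearMap.comp_apply]
  have hrep : ∀ x : U.obj c.pt, ∃ (j : J) (y : U.obj (F.obj j)), q j y = x := fun x =>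
    have := hpres J
    Concrete.isColimit_exists_rep (F ⋙ U) (isColimitOfPreserves U hc) x
  have heq : ∀ (i : J) (x y : U.obj (F.obj i)), q i x = q i y →
      ∃ (j : J) (h : i ≤ j), t h x = t h y := by
    intro i x y hxy
    have := hpres J
    obtain ⟨l, f, g, hfg⟩ := Concrete.isColimit_exists_of_rep_eq.{u} (F ⋙ U)
      (isColimitOfPreserves U hc) x y hxy
    exact ⟨l, leOfHom f, hfg⟩
  have hlim : ∀ δ : J, Order.IsSuccLimit δ → ∀ x : U.obj (F.obj δ),
      ∃ (j : J) (h : j < δ) (y : U.obj (F.obj j)), t h.le y = x := by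
    intro δ hδ x
    have hne : Nonempty (Set.Iio δ) := by
      have := hδ.not_isMin
      rw [not_isMin_iff] at this
      obtain ⟨a, ha⟩ := this
      exact ⟨⟨a, ha⟩⟩
    have := hpres (Set.Iio δ)
    have h1 := F.isColimitOfIsWellOrderContinuous δ hδ
    obtain ⟨j, y, hy⟩ := Concrete.isColimit_exists_rep _ (isColimitOfPreserves U h1) x
    exact ⟨j.1, j.2, y, hy⟩
  -- closing off
  have hb : ∀ i : J, ∃ j : J, ∃ h : Order.succ i ≤ j, ∀ x y : U.obj (F.obj (Order.succ i)),
      q _ x = q _ y → t h x = t h y := by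
    intro i
    let K := {p : U.obj (F.obj (Order.succ i)) × U.obj (F.obj (Order.succ i)) // q _ p.1 = q _ p.2}
    choose s hs hs' using fun p : K => heq _ p.1.1 p.1.2 p.2
    have hK : #K ≤ κ₀ := by
      refine (Cardinal.mk_subtype_le _).trans ?_
      rw [Cardinal.mk_prod, Cardinal.lift_id]
      exact (mul_le_mul' (hsucc i).1 (hsucc i).1).trans (Cardinal.mul_eq_self hκ₀).le
    obtain ⟨j, hj⟩ := hJ K s hK
    refine ⟨max j (Order.succ i), le_max_right _ _, fun x y hxy => ?_⟩
    have h1 := hs' ⟨(x, y), hxy⟩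
    have h2 : s ⟨(x, y), hxy⟩ ≤ max j (Order.succ i) := (hj _).trans (le_max_left _ _)
    have h3 := congrArg (t h2) h1
    rwa [htt, htt] at h3
  choose b hb1 hb2 using hb
  have hG : ∀ α₀ : J, ∃ δ, α₀ ≤ δ ∧ Function.Injective (q δ) := by
    intro α₀
    let α : ℕ → J := fun n => b^[n] α₀
    have hα : ∀ n, α (n + 1) = b (α n) := fun n => Function.iterate_succ_apply' b n α₀
    have hαs : ∀ n, Order.succ (α n) ≤ α (n + 1) := fun n => by rw [hα]; exact hb1 _
    have hαlt : ∀ n, α n < α (n + 1) := fun n => (Order.lt_succ _).trans_le (hαs n)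
    have hαm : StrictMono α := strictMono_nat_of_lt_succ hαlt
    have hne : {j | ∀ n, α n ≤ j}.Nonempty := by
      obtain ⟨j, hj⟩ := hJ (ULift.{u} ℕ) (fun n => α n.down) (by simpa using hκ₀)
      exact ⟨j, fun n => hj ⟨n⟩⟩
    obtain ⟨δ, hδ, hmin⟩ := WellFounded.has_min (wellFounded_lt (α := J)) _ hne
    have hlt : ∀ n, α n < δ := fun n => (hαlt n).trans_le (hδ _)
    have hcof : ∀ a < δ, ∃ n, a < α n := by
      intro a ha
      by_contra! hcon
      exact hmin a hcon ha
    have hδlim : Order.IsSuccLimit δ := by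
      refine ⟨fun h => (h.not_lt (hlt 0)), fun a ha => ?_⟩
      obtain ⟨n, hn⟩ := hcof a ha.lt
      exact ha.2 hn (hlt n)
    refine ⟨δ, hδ 0, fun x y hxy => ?_⟩
    obtain ⟨i, hi, x', rfl⟩ := hlim δ hδlim x
    obtain ⟨j, hj, y', rfl⟩ := hlim δ hδlim y
    obtain ⟨n, hn⟩ := hcof (max i j) (max_lt hi hj)
    have hin : i ≤ Order.succ (α n) :=
      ((le_max_left i j).trans hn.le).trans (Order.le_succ _)
    have hjn : j ≤ Order.succ (α n) :=
      ((le_max_right i j).trans hn.le).trans (Order.le_succ _)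
    have h1 := hb2 (α n) (t hin x') (t hjn y') (by
      rw [hqt, hqt] at hxy ⊢
      exact hxy)
    have h2 : b (α n) ≤ δ := by rw [← hα]; exact hδ _
    have h3 := congrArg (t h2) h1
    simpa only [htt] using h3
  have hGstar : ∀ δ, Function.Injective (q δ) → Star U (F.obj δ) := by
    intro δ hδ
    by_contra hns
    refine (hsucc δ).2.1 hns ?_
    intro x y hxy
    apply hδ
    have := congrArg (q (Order.succ δ)) hxy
    exact ((hqt (Order.le_succ δ) x).symm.trans this).trans (hqt (Order.le_succ δ) y)
  have hstar : Star U c.pt := by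
    intro Z' f x y hxy
    obtain ⟨i, x', rfl⟩ := hrep x
    obtain ⟨j, y', rfl⟩ := hrep y
    obtain ⟨δ, hδ, hδi⟩ := hG (max i j)
    have h1 := hGstar δ hδi Z' (c.ι.app δ ≫ f)
    have hi : i ≤ δ := (le_max_left _ _).trans hδ
    have hj : j ≤ δ := (le_max_right _ _).trans hδ
    rw [← hqt hi, ← hqt hj] at hxy ⊢
    congr 1
    apply h1
    simp only [Functor.map_comp, ModuleCat.hom_comp, LinearMap.comp_apply]
    exact hxy
  obtain ⟨Z', g, hg⟩ := hsmall c.pt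
  have hcard : #(U.obj c.pt) ≤ κ₀ := (Cardinal.mk_le_of_injective (hstar _ g)).trans hg
  choose r y hy using hrep
  obtain ⟨i, hi⟩ := hJ _ r hcard
  obtain ⟨δ, hδ, hδi⟩ := hG i
  refine ⟨δ, ?_⟩
  by_contra hM
  obtain ⟨h1, h2⟩ := (hsucc δ).2.2 (hGstar δ hδi) hM
  refine h2 ⟨hGstar δ hδi _ _, fun z => ?_⟩
  have h3 := h1 c.pt (c.ι.app (Order.succ δ))
  refine ⟨t ((hi (q _ z)).trans hδ) (y (q _ z)), ?_⟩
  apply h3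
  change q _ (t (Order.le_succ δ) _) = q _ z
  rw [hqt, hqt, hy]

open Cardinal in
theorem exists_maxObj {S : Type u} [Ring S] {C : Type (u+1)} [Category.{u} C]
    (U : C ⥤ ModuleCat.{u} S)
    (hcol : ∀ (J : Type u) [LinearOrder J] [Nonempty J], HasColimitsOfShape J C)
    (hpres : ∀ (J : Type u) [LinearOrder J] [Nonempty J], PreservesColimitsOfShape J U)
    (κ₀ : Cardinal.{u}) (hκ₀ : ℵ₀ ≤ κ₀)
    (hsmall : ∀ Z : C, ∃ (Z' : C) (_ : Z ⟶ Z'), #(U.obj Z') ≤ κ₀) (X₀ : C) :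
    ∃ (Z : C) (_ : X₀ ⟶ Z), IsMaxObj U Z := by
  -- the successor step
  have hstep : ∀ Z : C, ∃ (Z' : C) (f : Z ⟶ Z'), #(U.obj Z') ≤ κ₀ ∧
      (¬ Star U Z → ¬ Function.Injective (U.map f).hom) ∧
      (Star U Z → ¬ IsMaxObj U Z → Star U Z' ∧ ¬ Function.Bijective (U.map f).hom) := by
    intro Z
    by_cases hZ : Star U Z
    · by_cases hM : IsMaxObj U Z
      · obtain ⟨Z', f, h⟩ := hsmall Z
        exact ⟨Z', f, h, fun h => absurd hZ h, fun _ h => absurd hM h⟩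
      · have : ∃ (Z' : C) (f : Z ⟶ Z'), Star U Z' ∧ ¬ Function.Bijective (U.map f).hom := by
          by_contra! hc
          exact hM ⟨hZ, hc⟩
        obtain ⟨Z', f, h1, h2⟩ := this
        obtain ⟨Z'', g, hg⟩ := hsmall Z'
        exact ⟨Z', f, (Cardinal.mk_le_of_injective (h1 _ g)).trans hg, fun h => absurd hZ h,
          fun _ _ => ⟨h1, h2⟩⟩
    · have : ∃ (Z' : C) (f : Z ⟶ Z'), ¬ Function.Injective (U.map f).hom := by
        by_contra! hc
        exact hZ hc
      obtain ⟨Z', f, h1⟩ := this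
      obtain ⟨Z'', g, hg⟩ := hsmall Z'
      refine ⟨Z'', f ≫ g, hg, fun _ h => h1 ?_, fun h => absurd h hZ⟩
      intro a b hab
      apply h
      simp only [Functor.map_comp, ModuleCat.hom_comp, LinearMap.comp_apply, hab]
  choose sc tsc hsc using hstep
  let Φ : SmallObject.SuccStruct C := ⟨X₀, sc, tsc⟩
  let κ := Order.succ κ₀
  have hκ : κ.IsRegular := Cardinal.isRegular_succ hκ₀
  have : Nonempty κ.ord.ToType := by simpa using hκ.ne_zero
  let _ : OrderBot κ.ord.ToType := WellFoundedLT.toOrderBot κ.ord.ToType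
  have hnomax : NoMaxOrder κ.ord.ToType := Cardinal.noMaxOrder hκ.aleph0_le
  have : HasIterationOfShape κ.ord.ToType C :=
    { hasColimitsOfShape_of_isSuccLimit := fun j hj => by
        have : Nonempty (Set.Iio j) := ⟨⟨⊥, hj.bot_lt⟩⟩
        exact hcol _
      hasColimitsOfShape := hcol _ }
  let F := Φ.iterationFunctor κ.ord.ToType
  have hF : F.IsWellOrderContinuous := inferInstance
  let c := Φ.iterationCocone κ.ord.ToType
  let hc : IsColimit c := Φ.isColimitIterationCocone κ.ord.ToType
  have hsucc : ∀ j, #(U.obj (F.obj (Order.succ j))) ≤ κ₀ ∧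
      (¬ Star U (F.obj j) →
        ¬ Function.Injective (U.map (F.map (homOfLE (Order.le_succ j)))).hom) ∧
      (Star U (F.obj j) → ¬ IsMaxObj U (F.obj j) → Star U (F.obj (Order.succ j)) ∧
        ¬ Function.Bijective (U.map (F.map (homOfLE (Order.le_succ j)))).hom) := by
    intro j
    have hj : ¬ IsMax j := not_isMax j
    obtain ⟨h1, h2, h3⟩ := hsc (F.obj j)
    let e : F.obj (Order.succ j) ≅ sc (F.obj j) := Φ.iterationFunctorObjSuccIso j hj
    have he : F.map (homOfLE (Order.le_succ j)) = tsc (F.obj j) ≫ e.inv :=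
      Φ.iterationFunctor_map_succ j hj
    let e' : U.obj (F.obj (Order.succ j)) ≃ₗ[S] U.obj (sc (F.obj j)) :=
      (U.mapIso e).toLinearEquiv
    have he' : ⇑(U.map (F.map (homOfLE (Order.le_succ j)))).hom =
        e'.symm ∘ (U.map (tsc (F.obj j))).hom := by
      rw [he]; ext x; simp [e']
    refine ⟨(Cardinal.mk_congr e'.toEquiv).trans_le h1, fun hs hi => h2 hs ?_, fun hs hm => ?_⟩
    · rw [he'] at hi
      exact hi.of_comp
    · obtain ⟨h4, h5⟩ := h3 hs hm
      refine ⟨fun Z' f a b hab => ?_, fun hb => h5 ?_⟩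
      · have := @h4 Z' (e.inv ≫ f) (e' a) (e' b) (by
          simp only [Functor.map_comp, ModuleCat.hom_comp, LinearMap.comp_apply]
          have h6 : ∀ a, (U.map e.inv).hom (e' a) = a := fun a => e'.symm_apply_apply a
          rw [h6, h6, hab])
        exact e'.injective this
      · rw [he'] at hb
        exact (Function.Bijective.of_comp_iff' e'.symm.bijective _).1 hb
  obtain ⟨j, hj⟩ := exists_max_stage U hpres κ₀ hκ₀ hsmall
    (fun K s hK => exists_bound κ hκ s (hK.trans_lt (Order.lt_succ κ₀))) F hF c hc hsucc
  exact ⟨F.obj j, (Φ.ιIterationFunctor κ.ord.ToType).app j, hj⟩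

end maxobj
section cover
open ExactPaper

variable {S : Type u} [Ring S]

/-- The orthogonal class as an object property. -/
def perpProp (𝒳 : Set (ModuleCat.{u} S)) : ObjectProperty (ModuleCat.{u} S) :=
  fun N => N ∈ rightPerp1 𝒳

/-- Objects over `A` with source in the class. -/
abbrev Ov (𝒳 : Set (ModuleCat.{u} S)) (A : ModuleCat.{u} S) :=
  CostructuredArrow (perpProp 𝒳).ι A

/-- The underlying module. -/
abbrev Ovf (𝒳 : Set (ModuleCat.{u} S)) (A : ModuleCat.{u} S) : Ov 𝒳 A ⥤ ModuleCat.{u} S :=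
  CostructuredArrow.proj (perpProp 𝒳).ι A ⋙ (perpProp 𝒳).ι

/-- Constructor for objects. -/
def Ov.mk' (𝒳 : Set (ModuleCat.{u} S)) {A : ModuleCat.{u} S} (Y : ModuleCat.{u} S)
    (hY : Y ∈ rightPerp1 𝒳) (f : Y ⟶ A) : Ov 𝒳 A :=
  let Y' : (perpProp 𝒳).FullSubcategory := ⟨Y, hY⟩
  let str : (perpProp 𝒳).ι.obj Y' ⟶ A := f
  CostructuredArrow.mk str

/-- The structure map. -/
def Ov.str {𝒳 : Set (ModuleCat.{u} S)} {A : ModuleCat.{u} S} (Z : Ov 𝒳 A) :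
    (Ovf 𝒳 A).obj Z ⟶ A := Z.hom

theorem Ov.mem {𝒳 : Set (ModuleCat.{u} S)} {A : ModuleCat.{u} S} (Z : Ov 𝒳 A) :
    (Ovf 𝒳 A).obj Z ∈ rightPerp1 𝒳 := Z.left.property

theorem Ov.exists_hom {𝒳 : Set (ModuleCat.{u} S)} {A : ModuleCat.{u} S} (Z Z' : Ov 𝒳 A)
    (g : (Ovf 𝒳 A).obj Z ⟶ (Ovf 𝒳 A).obj Z') (w : g ≫ Z'.str = Z.str) :
    ∃ φ : Z ⟶ Z', (Ovf 𝒳 A).map φ = g :=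
  ⟨CostructuredArrow.homMk (ObjectProperty.homMk g) w, rfl⟩

theorem Ov.w {𝒳 : Set (ModuleCat.{u} S)} {A : ModuleCat.{u} S} {Z Z' : Ov 𝒳 A} (φ : Z ⟶ Z') :
    (Ovf 𝒳 A).map φ ≫ Z'.str = Z.str := CostructuredArrow.w φ

theorem ov_colim (hS : Coh S) (𝒳 : Set (ModuleCat.{u} S))
    (h𝒳 : ∀ X ∈ 𝒳, Module.FinitePresentation S X) (A : ModuleCat.{u} S)
    (J : Type u) [LinearOrder J] [Nonempty J] :
    HasColimitsOfShape J (Ov 𝒳 A) ∧ PreservesColimitsOfShape J (Ovf 𝒳 A) := by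
  have : (perpProp 𝒳).IsClosedUnderColimitsOfShape J :=
    ⟨fun N ⟨h⟩ => perp_colim hS 𝒳 h𝒳 h.diag h.cocone h.isColimit h.prop_diag_obj⟩
  constructor <;> infer_instance

theorem ov_small (hS : Coh S) (𝒳 : Set (ModuleCat.{u} S))
    (h𝒳 : ∀ X ∈ 𝒳, Module.FinitePresentation S X) (A : ModuleCat.{u} S) (Z : Ov 𝒳 A) :
    ∃ (Z' : Ov 𝒳 A) (_ : Z ⟶ Z'),
      Cardinal.mk ((Ovf 𝒳 A).obj Z') ≤ max (Cardinal.mk (Bd S A)) Cardinal.aleph0 := by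
  obtain ⟨P, hP, hpure, hred⟩ := exists_reduced Z.str.hom
  let Z' : Ov 𝒳 A := Ov.mk' 𝒳 (ModuleCat.of S ((Ovf 𝒳 A).obj Z ⧸ P))
    (perp_pureQuot hS 𝒳 h𝒳 Z.mem P hpure) (ModuleCat.ofHom (P.liftQ Z.str.hom hP))
  obtain ⟨φ, hφ⟩ := Ov.exists_hom Z Z' (ModuleCat.ofHom P.mkQ) (by
    ext z
    rfl)
  exact ⟨Z', φ, le_max_of_le_left (Cardinal.mk_le_of_surjective hred.small)⟩

/-- Second part of the theorem. -/
theorem covering (hS : Coh S) (𝒳 : Set (ModuleCat.{u} S))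
    (h𝒳 : ∀ X ∈ 𝒳, Module.FinitePresentation S X) (A : ModuleCat.{u} S) :
    ∃ (Y : ModuleCat.{u} S) (f : Y ⟶ A), IsCover (rightPerp1 𝒳) f := by
  have hmax := exists_maxObj (Ovf 𝒳 A) (fun J => (ov_colim hS 𝒳 h𝒳 A J).1)
    (fun J => (ov_colim hS 𝒳 h𝒳 A J).2) (max (Cardinal.mk (Bd S A)) Cardinal.aleph0)
    (le_max_right _ _) (ov_small hS 𝒳 h𝒳 A)
  obtain ⟨Y, -, hY⟩ := hmax (Ov.mk' 𝒳 (ModuleCat.of S PUnit.{u+1}) (perp_zero 𝒳) 0)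
  refine ⟨(Ovf 𝒳 A).obj Y, Y.str, ⟨Y.mem, ?_⟩, ?_⟩
  · intro Z hZ g
    let T : Ov 𝒳 A := Ov.mk' 𝒳 (ModuleCat.of S ((Ovf 𝒳 A).obj Y × Z))
      (perp_prod 𝒳 _ _ Y.mem hZ) (ModuleCat.ofHom (Y.str.hom.coprod g.hom))
    obtain ⟨i, hi⟩ := Ov.exists_hom Y T (ModuleCat.ofHom (LinearMap.inl S _ _)) (by
      ext y
      change Y.str.hom y + g.hom 0 = Y.str.hom y
      rw [map_zero, add_zero])
    obtain ⟨M, k, hM⟩ := hmax T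
    have hb := hY.2 M (i ≫ k) hM.1
    let e := LinearEquiv.ofBijective ((Ovf 𝒳 A).map (i ≫ k)).hom hb
    refine ⟨ModuleCat.ofHom (e.symm.toLinearMap ∘ₗ ((Ovf 𝒳 A).map k).hom ∘ₗ
      LinearMap.inr S _ _), ?_⟩
    ext z
    have h1 : ∀ y, Y.str.hom y = M.str.hom (e y) := fun y =>
      (congrArg (fun φ => φ.hom y) (Ov.w (i ≫ k))).symm
    have h2 : ∀ x, M.str.hom (((Ovf 𝒳 A).map k).hom x) = T.str.hom x := fun x =>
      congrArg (fun φ => φ.hom x) (Ov.w k)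
    change Y.str.hom (e.symm (((Ovf 𝒳 A).map k).hom (0, z))) = g.hom z
    rw [h1, e.apply_symm_apply]
    refine (h2 _).trans ?_
    change Y.str.hom 0 + g.hom z = g.hom z
    rw [map_zero, zero_add]
  · intro h hh
    obtain ⟨φ, hφ⟩ := Ov.exists_hom Y Y h hh
    have hb := hY.2 Y φ hY.1
    rw [hφ] at hb
    exact (ConcreteCategory.isIso_iff_bijective h).2 hb

end cover

end PerpCover

open ExactPaper CategoryTheory Limits in
/-- **Corollary 4.5(1)**: if `𝒳` is a class of pure projective right `R`-modules, then
`𝒳^⊥₁` is preenveloping; if moreover `R` is right coherent (every finitely generated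
right ideal is finitely presented) and every module in `𝒳` is finitely presented, then
`𝒳^⊥₁` is also covering. -/
theorem rightPerp1_preenveloping_of_pureProjective
    {R : Type u} [Ring R]
    (𝒳 : Set (ModuleCat.{u} Rᵐᵒᵖ)) (h𝒳 : ∀ X ∈ 𝒳, PureProjective X) :
    (∀ A : ModuleCat.{u} Rᵐᵒᵖ, ∃ (Y : ModuleCat.{u} Rᵐᵒᵖ) (j : A ⟶ Y),
      IsPreenvelope (rightPerp1 𝒳) j) ∧
    ((∀ I : Submodule Rᵐᵒᵖ R, I.FG → Module.FinitePresentation Rᵐᵒᵖ I) →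
      (∀ X ∈ 𝒳, Module.FinitePresentation Rᵐᵒᵖ X) →
      ∀ A : ModuleCat.{u} Rᵐᵒᵖ, ∃ (Y : ModuleCat.{u} Rᵐᵒᵖ) (f : Y ⟶ A),
        IsCover (rightPerp1 𝒳) f) := by
  exact ⟨PerpCover.preenveloping 𝒳 h𝒳, fun hcoh hfp A =>
    PerpCover.covering (PerpCover.coh_of hcoh) 𝒳 hfp A⟩
end
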